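/- arXiv:0810.1042 — 2 statements merged into one kernel-verified Lean document; each statement's English description precedes it below -/
import Mathlib

section
/- Let u : ℝⁿ → ℂ and V : ℝⁿ → ℂ satisfy Δu + Vu = 0 on all of ℝⁿ, with |V(x)| ≤ 1 for all x, |u(x)| ≤ C₀ for all x, and u(0) = 1. For R > 0 define M(R) = inf over x₀ with |x₀| = R of sup over x ∈ B(x₀,1) of |u(x)|. Then there exists a constant C > 0 (depending only on n and C₀) such that for all sufficiently large R, M(R) ≥ C · exp(−C · R^{4/3} · log R). -/
open MeasureTheory Metric Set Filter
open scoped ENNReal NNReal Topology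

/-- The Laplacian of a complex-valued function on `ℝⁿ`, as the sum of the
second partial derivatives in the coordinate directions. -/
noncomputable def lapl {n : ℕ} (f : EuclideanSpace ℝ (Fin n) → ℂ)
    (x : EuclideanSpace ℝ (Fin n)) : ℂ :=
  ∑ i, fderiv ℝ (fun y => fderiv ℝ f y (EuclideanSpace.single i 1)) x (EuclideanSpace.single i 1)


abbrev QE (d : ℕ) := EuclideanSpace ℝ (Fin d)

noncomputable def qdiv {d : ℕ} (J : QE d → QE d) (x : QE d) : ℝ :=
  ∑ i, fderiv ℝ J x (EuclideanSpace.single i 1) i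

noncomputable def qlap {d : ℕ} (f : QE d → ℝ) (x : QE d) : ℝ := qdiv (gradient f) x

lemma q_int_fderiv {d : ℕ} {f : QE d → ℝ} (hf : ContDiff ℝ 1 f) (hc : HasCompactSupport f)
    (v : QE d) : ∫ x, fderiv ℝ f x v = 0 := by
  obtain ⟨g, hg⟩ : ∃ g : ContDiffBump (0 : QE d), True := ⟨⟨1, 2, by norm_num, by norm_num⟩, trivial⟩
  have hcont : Continuous (fun x => fderiv ℝ f x v) :=
    (hf.continuous_fderiv one_ne_zero).clm_apply continuous_const
  have hcs : HasCompactSupport (fun x => fderiv ℝ f x v) := hc.fderiv_apply (𝕜 := ℝ) v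
  have := integral_mul_fderiv_eq_neg_fderiv_mul_of_integrable (μ := (volume : Measure (QE d)))
    (f := fun _ : QE d => (1:ℝ)) (g := f) (v := v) (by simp)
    (by simpa using hcont.integrable_of_hasCompactSupport hcs)
    (by simpa using hf.continuous.integrable_of_hasCompactSupport hc)
    (fun x _ => differentiableAt_const _) (fun x _ => hf.differentiable one_ne_zero x)
  simpa using this

lemma q_int_div {d : ℕ} {J : QE d → QE d} (hJ : ContDiff ℝ 1 J) (hc : HasCompactSupport J) :
    Integrable (qdiv J) ∧ ∫ x, qdiv J x = 0 := by
  have hco : ∀ i, ContDiff ℝ 1 (fun x => J x i) := fun i => by fun_prop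
  have hcc : ∀ i, HasCompactSupport (fun x => J x i) := fun i => by
    exact hc.comp_left (g := fun y : QE d => y i) (by simp)
  have heq : ∀ x i v, fderiv ℝ J x v i = fderiv ℝ (fun x => J x i) x v := by
    intro x i v
    have h := (hJ.differentiable one_ne_zero x).hasFDerivAt
    have h2 := ((EuclideanSpace.proj i : QE d →L[ℝ] ℝ).hasFDerivAt.comp x h).fderiv
    have : (fun x => J x i) = (EuclideanSpace.proj i : QE d →L[ℝ] ℝ) ∘ J := rfl
    rw [this, h2]; rfl
  have hi : ∀ i, Integrable (fun x => fderiv ℝ J x (EuclideanSpace.single i 1) i) := by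
    intro i
    simp_rw [heq]
    exact (((hco i).continuous_fderiv one_ne_zero).clm_apply
      continuous_const).integrable_of_hasCompactSupport ((hcc i).fderiv_apply (𝕜 := ℝ) _)
  refine ⟨integrable_finsetSum _ fun i _ => hi i, ?_⟩
  unfold qdiv
  rw [integral_finsetSum _ fun i _ => hi i]
  refine Finset.sum_eq_zero fun i _ => ?_
  simp_rw [heq]
  exact q_int_fderiv (hco i) (hcc i) _

lemma q_div_smul {d : ℕ} {A : QE d → ℝ} {G : QE d → QE d} {x : QE d}
    (hA : DifferentiableAt ℝ A x) (hG : DifferentiableAt ℝ G x) :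
    qdiv (fun y => A y • G y) x = fderiv ℝ A x (G x) + A x * qdiv G x := by
  unfold qdiv
  have h := (hA.hasFDerivAt.smul hG.hasFDerivAt).fderiv
  have h' : fderiv ℝ (fun y => A y • G y) x = _ := h
  rw [h', Finset.mul_sum]
  have hx : G x = ∑ i, G x i • EuclideanSpace.single i (1:ℝ) := by
    ext j; simp [Finset.sum_apply, Pi.single_apply]
  conv_rhs => rw [hx]
  simp only [map_sum, map_smul, smul_eq_mul]
  rw [← Finset.sum_add_distrib]
  refine Finset.sum_congr rfl fun i _ => ?_
  simp
  ring

lemma q_div_id {d : ℕ} (x : QE d) : qdiv (fun y : QE d => y) x = d := by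
  unfold qdiv
  simp

lemma q_div_add {d : ℕ} {G H : QE d → QE d} {x : QE d}
    (hH : DifferentiableAt ℝ H x) (hG : DifferentiableAt ℝ G x) :
    qdiv (fun y => G y + H y) x = qdiv G x + qdiv H x := by
  unfold qdiv
  have h' : fderiv ℝ (fun y => G y + H y) x = _ := fderiv_add hG hH
  rw [h']
  simp [Finset.sum_add_distrib]

lemma q_ident (f h k L m s W b t d : ℝ) (hs : s ≠ 0) (p q g c At A B DA DB : ℝ)
  (hp : p=-1+2*b*s) (hq : q=4*b*s) (hg : g=t*p+(d-2)/2) (hc : c=(d-2)^2/4)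
  (hA : A=-4*t*W*(2*p*(h+g*f)+q*f))
  (hB : B=4*t*W*(p*k+f^2/s*(-p*g^2-q*g+q-(t^2*p^2-c)*p)))
  (hAt : At=-2*t*p*(h+g*f)-t*q*f)
  (hDA : DA = -4*t*((2*t*p/s*W*h)*(2*p*(h+g*f)+q*f) + 
     W * (2*(2*b*(2*h))*(h+g*f) + 2*p*((k+m)+t*(2*b*(2*h))*f+g*k) + 4*b*(2*h)*f+q*k)))
  (hDB : DB = 4*t*((2*t*p*W)*(p*k+f^2/s*(-p*g^2-q*g+q-(t^2*p^2-c)*p)) 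
     + W * ((2*b*(2*s))*k + p*(2*m) + (2*f*h/s - f^2*(2*s)/s^2)*(-p*g^2-q*g+q-(t^2*p^2-c)*p)
      + f^2/s*(-(2*b*(2*s))*g^2 - p*(2*g*(t*(2*b*(2*s)))) - 4*b*(2*s)*g - q*(t*(2*b*(2*s)))
         + 4*b*(2*s) - (t^2*(2*p*(2*b*(2*s))))*p - (t^2*p^2-c)*(2*b*(2*s)))))) :
  4*W*L*At-4*W/s*At^2 = (DA + A*L + (DB + d * B)) + W/s*(8*t*q*(h+g*f)^2+(8*t^3*p^2*q-8*t*q)*f^2) := by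
  subst hA hB hAt hDA hDB hc 
  subst hg
  subst hp hq
  field_simp
  ring


noncomputable def qW (b t s : ℝ) : ℝ := Real.exp (-t * Real.log s + 2 * t * b * s)

lemma qW_pos (b t s : ℝ) : 0 < qW b t s := Real.exp_pos _

lemma q_grad_contDiff {d : ℕ} {f : QE d → ℝ} {m n : WithTop ℕ∞} (hf : ContDiff ℝ n f)
    (hmn : m + 1 ≤ n) : ContDiff ℝ m (gradient f) := by
  unfold gradient
  exact ((InnerProductSpace.toDual ℝ (QE d)).symm.contDiff).comp (hf.fderiv_right hmn)

lemma q_inner_grad {d : ℕ} (f : QE d → ℝ) (x v : QE d) : inner ℝ (gradient f x) v = fderiv ℝ f x v := by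
  simp

lemma q_symm {d : ℕ} {f : QE d → ℝ} (hf : ContDiff ℝ 2 f) (x v w : QE d) :
    inner ℝ (fderiv ℝ (gradient f) x v) w = inner ℝ (fderiv ℝ (gradient f) x w) v := by
  have hs : IsSymmSndFDerivAt ℝ f x := hf.contDiffAt.isSymmSndFDerivAt (by simp)
  have hd : ∀ w, (fun y => fderiv ℝ f y w) = fun y => inner ℝ (gradient f y) w := by
    intro w; ext y; simp
  have hG : DifferentiableAt ℝ (gradient f) x :=
    (q_grad_contDiff (m := 1) hf (by norm_num)).differentiable one_ne_zero x
  have hF : DifferentiableAt ℝ (fderiv ℝ f) x :=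
    (hf.fderiv_right (m := 1) (by norm_num)).differentiable one_ne_zero x
  have key : ∀ v w, inner ℝ (fderiv ℝ (gradient f) x v) w = fderiv ℝ (fderiv ℝ f) x v w := by
    intro v w
    have h1 : HasFDerivAt (fun y => fderiv ℝ f y w) _ x :=
      hF.hasFDerivAt.clm_apply (hasFDerivAt_const w x)
    have h2 := hG.hasFDerivAt.inner ℝ (hasFDerivAt_const w x)
    rw [hd w] at h1
    have := congrArg (fun L => L v) (h1.unique h2)
    simpa using this.symm
  rw [key, key]
  exact hs v w

section
variable {d : ℕ} (b t : ℝ) (f : QE d → ℝ)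

noncomputable def qA (y : QE d) : ℝ :=
  -4*t*(qW b t (‖y‖^2)*(2*(-1+2*b*‖y‖^2)*(inner ℝ y (gradient f y)
    +(t*(-1+2*b*‖y‖^2)+((d:ℝ)-2)/2)*f y)+(4*b*‖y‖^2)*f y))

noncomputable def qB (y : QE d) : ℝ :=
  4*t*(qW b t (‖y‖^2)*((-1+2*b*‖y‖^2)*inner ℝ (gradient f y) (gradient f y)
    +f y^2/‖y‖^2*(-(-1+2*b*‖y‖^2)*(t*(-1+2*b*‖y‖^2)+((d:ℝ)-2)/2)^2
      -(4*b*‖y‖^2)*(t*(-1+2*b*‖y‖^2)+((d:ℝ)-2)/2)+4*b*‖y‖^2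
      -(t^2*(-1+2*b*‖y‖^2)^2-((d:ℝ)-2)^2/4)*(-1+2*b*‖y‖^2))))

noncomputable def qJ (y : QE d) : QE d := qA b t f y • gradient f y + qB b t f y • y

variable {b t f}

lemma qW_contDiffAt {x : QE d} (hx : x ≠ 0) {n : WithTop ℕ∞} :
    ContDiffAt ℝ n (fun y : QE d => qW b t (‖y‖^2)) x := by
  unfold qW
  have hx2 : ‖x‖^2 ≠ 0 := by simpa using hx
  have hn : ContDiffAt ℝ n (fun y : QE d => ‖y‖^2) x := (contDiff_norm_sq ℝ).contDiffAt
  exact ((contDiffAt_const.mul (hn.log hx2)).add (contDiffAt_const.mul hn)).exp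

lemma qA_contDiffAt (hf : ContDiff ℝ 2 f) {x : QE d} (hx : x ≠ 0) : ContDiffAt ℝ 1 (qA b t f) x := by
  have hW := qW_contDiffAt (b := b) (t := t) hx (n := 1)
  have hG : ContDiffAt ℝ 1 (gradient f) x := (q_grad_contDiff hf (by norm_num)).contDiffAt
  have hf1 : ContDiffAt ℝ 1 f x := (hf.of_le (by norm_num)).contDiffAt
  have hn : ContDiffAt ℝ 1 (fun y : QE d => ‖y‖^2) x := (contDiff_norm_sq ℝ).contDiffAt
  have hh : ContDiffAt ℝ 1 (fun y => inner ℝ y (gradient f y)) x := contDiffAt_id.inner ℝ hG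
  unfold qA
  fun_prop

lemma qB_contDiffAt (hf : ContDiff ℝ 2 f) {x : QE d} (hx : x ≠ 0) : ContDiffAt ℝ 1 (qB b t f) x := by
  have hW := qW_contDiffAt (b := b) (t := t) hx (n := 1)
  have hG : ContDiffAt ℝ 1 (gradient f) x := (q_grad_contDiff hf (by norm_num)).contDiffAt
  have hf1 : ContDiffAt ℝ 1 f x := (hf.of_le (by norm_num)).contDiffAt
  have hx2 : ‖x‖^2 ≠ 0 := by simpa using hx
  have hn : ContDiffAt ℝ 1 (fun y : QE d => ‖y‖^2) x := (contDiff_norm_sq ℝ).contDiffAt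
  have hh : ContDiffAt ℝ 1 (fun y => inner ℝ (gradient f y) (gradient f y)) x := hG.inner ℝ hG
  have hq : ContDiffAt ℝ 1 (fun y : QE d => f y ^ 2 / ‖y‖^2) x := (hf1.pow 2).div hn hx2
  unfold qB
  fun_prop

lemma qW_line {x v : QE d} (hx : x ≠ 0) :
    HasDerivAt (fun r : ℝ => qW b t (‖x + r • v‖^2))
      (2*t*(-1+2*b*‖x‖^2)/‖x‖^2*qW b t (‖x‖^2)*inner ℝ x v) 0 := by
  have hx2 : ‖x‖^2 ≠ 0 := by simpa using hx
  have hs : HasDerivAt (fun r : ℝ => ‖x + r • v‖^2) (2 * inner ℝ x v) 0 := by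
    have := ((hasStrictFDerivAt_norm_sq x).hasFDerivAt.hasLineDerivAt v)
    simpa [HasLineDerivAt] using this
  unfold qW
  have h0 : ‖x + (0:ℝ) • v‖^2 = ‖x‖^2 := by simp
  have := (((hs.log (by simpa using hx2)).const_mul (-t)).add (hs.const_mul (2*t*b))).exp
  refine HasDerivAt.congr_deriv this ?_
  rw [Pi.add_apply]
  beta_reduce
  rw [h0]
  field_simp

lemma qs_line (x v : QE d) : HasDerivAt (fun r : ℝ => ‖x + r • v‖^2) (2 * inner ℝ x v) 0 := by
  have := ((hasStrictFDerivAt_norm_sq x).hasFDerivAt.hasLineDerivAt v)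
  simpa [HasLineDerivAt] using this

lemma qf_line (hf : ContDiff ℝ 2 f) (x v : QE d) :
    HasDerivAt (fun r : ℝ => f (x + r • v)) (inner ℝ (gradient f x) v) 0 := by
  have := (hf.differentiable (by norm_num) x).hasFDerivAt.hasLineDerivAt v
  simpa [HasLineDerivAt] using this

lemma qh_line (hf : ContDiff ℝ 2 f) (x v : QE d) :
    HasDerivAt (fun r : ℝ => (inner ℝ (x + r • v) (gradient f (x + r • v)) : ℝ))
      (inner ℝ v (gradient f x) + inner ℝ (fderiv ℝ (gradient f) x v) x) 0 := by
  have hG : DifferentiableAt ℝ (gradient f) x :=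
    (q_grad_contDiff (m := 1) hf (by norm_num)).differentiable one_ne_zero x
  have := ((hasFDerivAt_id x).inner ℝ hG.hasFDerivAt).hasLineDerivAt v
  refine HasDerivAt.congr_deriv this ?_
  simp [real_inner_comm]
  ring

lemma qk_line (hf : ContDiff ℝ 2 f) (x v : QE d) :
    HasDerivAt (fun r : ℝ => (inner ℝ (gradient f (x + r • v)) (gradient f (x + r • v)) : ℝ))
      (2 * inner ℝ (fderiv ℝ (gradient f) x v) (gradient f x)) 0 := by
  have hG : DifferentiableAt ℝ (gradient f) x :=
    (q_grad_contDiff (m := 1) hf (by norm_num)).differentiable one_ne_zero x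
  have := (hG.hasFDerivAt.inner ℝ hG.hasFDerivAt).hasLineDerivAt v
  refine HasDerivAt.congr_deriv this ?_
  have := real_inner_comm (fderiv ℝ (gradient f) x v) (gradient f x)
  simp [-inner_gradient_left, -inner_gradient_right] 
  rw [this]
  ring

end


lemma qA_fderiv {d : ℕ} {b t : ℝ} {f : QE d → ℝ} (hf : ContDiff ℝ 2 f) {x : QE d} (hx : x ≠ 0)
    (v : QE d) :
    fderiv ℝ (qA b t f) x v = 
     -4*t*((2*t*(-1+2*b*‖x‖^2)/‖x‖^2*qW b t (‖x‖^2)*inner ℝ x v)*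
        (2*(-1+2*b*‖x‖^2)*(inner ℝ x (gradient f x)
          +(t*(-1+2*b*‖x‖^2)+((d:ℝ)-2)/2)*f x)+(4*b*‖x‖^2)*f x)
      + qW b t (‖x‖^2) * (2*(2*b*(2 * inner ℝ x v))*(inner ℝ x (gradient f x)
          +(t*(-1+2*b*‖x‖^2)+((d:ℝ)-2)/2)*f x)
        + 2*(-1+2*b*‖x‖^2)*((inner ℝ v (gradient f x) + inner ℝ (fderiv ℝ (gradient f) x v) x)
          +t*(2*b*(2 * inner ℝ x v))*f x
          +(t*(-1+2*b*‖x‖^2)+((d:ℝ)-2)/2)*inner ℝ (gradient f x) v)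
        + 4*b*(2 * inner ℝ x v)*f x+4*b*‖x‖^2*inner ℝ (gradient f x) v)) := by
  have h1 : HasDerivAt (fun r : ℝ => qA b t f (x + r • v)) (fderiv ℝ (qA b t f) x v) 0 :=
    ((qA_contDiffAt hf hx).differentiableAt one_ne_zero).hasFDerivAt.hasLineDerivAt v
  refine h1.unique ?_
  have hW := qW_line (b := b) (t := t) (v := v) hx
  have hs := qs_line x v
  have hF := qf_line hf x v
  have hh := qh_line hf x v
  have hp := ((hs.const_mul (2*b)).const_add (-1))
  have hg := ((hp.const_mul t).add_const (((d:ℝ)-2)/2))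
  have hq := hs.const_mul (4*b)
  have := (hW.mul (((hp.const_mul 2).mul (hh.add (hg.mul hF))).add (hq.mul hF))).const_mul (-4*t)
  refine HasDerivAt.congr_deriv this ?_
  simp only [Pi.add_apply, Pi.mul_apply, zero_smul, add_zero]
  ring

lemma qB_fderiv {d : ℕ} {b t : ℝ} {f : QE d → ℝ} (hf : ContDiff ℝ 2 f) {x : QE d} (hx : x ≠ 0)
    (v : QE d) (s f0 k p q g c s' f' k' : ℝ) (hs0 : s = ‖x‖^2) (hf0 : f0 = f x)
    (hk0 : k = inner ℝ (gradient f x) (gradient f x)) (hp0 : p = -1+2*b*s) (hq0 : q = 4*b*s)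
    (hg0 : g = t*p+((d:ℝ)-2)/2) (hc0 : c = ((d:ℝ)-2)^2/4) (hs' : s' = 2 * inner ℝ x v)
    (hf' : f' = inner ℝ (gradient f x) v)
    (hk' : k' = 2 * inner ℝ (fderiv ℝ (gradient f) x v) (gradient f x)) :
    fderiv ℝ (qB b t f) x v = 4*t*((2*t*p/s*qW b t s*inner ℝ x v)*(p*k+f0^2/s*(-p*g^2-q*g+q-(t^2*p^2-c)*p)) 
     + qW b t s * ((2*b*s')*k + p*k' + (2*f0*f'/s - f0^2*s'/s^2)*(-p*g^2-q*g+q-(t^2*p^2-c)*p)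
      + f0^2/s*(-(2*b*s')*g^2 - p*(2*g*(t*(2*b*s'))) - 4*b*s'*g - q*(t*(2*b*s'))
         + 4*b*s' - (t^2*(2*p*(2*b*s')))*p - (t^2*p^2-c)*(2*b*s')))) := by
  have h1 : HasDerivAt (fun r : ℝ => qB b t f (x + r • v)) (fderiv ℝ (qB b t f) x v) 0 :=
    ((qB_contDiffAt hf hx).differentiableAt one_ne_zero).hasFDerivAt.hasLineDerivAt v
  refine h1.unique ?_
  have hx2 : ‖x‖^2 ≠ 0 := by simpa using hx
  have hx2' : ‖x + (0:ℝ) • v‖^2 ≠ 0 := by simpa using hx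
  have hW := qW_line (b := b) (t := t) (v := v) hx
  have hs := qs_line x v
  have hF := qf_line hf x v
  have hh := qk_line hf x v
  have hp := ((hs.const_mul (2*b)).const_add (-1))
  have hg := ((hp.const_mul t).add_const (((d:ℝ)-2)/2))
  have hq := hs.const_mul (4*b)
  have hS := (((hp.neg.mul (hg.pow 2)).sub (hq.mul hg)).add hq).sub
    ((((hp.pow 2).const_mul (t^2)).sub_const (((d:ℝ)-2)^2/4)).mul hp)
  have := (hW.mul ((hp.mul hh).add (((hF.pow 2).div hs hx2').mul hS))).const_mul (4*t)
  refine HasDerivAt.congr_deriv this ?_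
  simp only [Pi.add_apply, Pi.mul_apply, Pi.sub_apply, Pi.neg_apply, Pi.pow_apply, Pi.div_apply, zero_smul, add_zero]
  rw [← hs', ← hk0, ← hk', ← hf0, ← hf', ← hs0, ← hp0, ← hq0, ← hg0, ← hc0]
  have hsne : s ≠ 0 := by rw [hs0]; exact hx2
  field_simp
  ring

/-- Pointwise Carleman inequality. -/
lemma q_pointwise {d : ℕ} {b t : ℝ} {f : QE d → ℝ} (hf : ContDiff ℝ 2 f) {x : QE d} (hx : x ≠ 0)
    (hb : 0 ≤ b) (ht : 0 ≤ t) :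
    qdiv (qJ b t f) x + qW b t (‖x‖^2) * (32*b*t^3*(-1+2*b*‖x‖^2)^2 - 32*t*b) * f x ^2
      ≤ qW b t (‖x‖^2) * ‖x‖^2 * qlap f x ^2 := by
  have hx2 : ‖x‖^2 ≠ 0 := by simpa using hx
  have hxp : 0 < ‖x‖^2 := by positivity
  have hA := (qA_contDiffAt (b := b) (t := t) hf hx).differentiableAt one_ne_zero
  have hB := (qB_contDiffAt (b := b) (t := t) hf hx).differentiableAt one_ne_zero
  have hG : DifferentiableAt ℝ (gradient f) x :=
    (q_grad_contDiff (m := 1) hf (by norm_num)).differentiable one_ne_zero x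
  have hd : qdiv (qJ b t f) x = fderiv ℝ (qA b t f) x (gradient f x) + qA b t f x * qlap f x
      + (fderiv ℝ (qB b t f) x x + d * qB b t f x) := by
    unfold qJ
    rw [q_div_add (G := fun y => qA b t f y • gradient f y) (H := fun y => qB b t f y • y)
      (hB.smul differentiableAt_id) (hA.smul hG), q_div_smul hA hG,
      q_div_smul (G := fun y => y) hB differentiableAt_id, q_div_id]
    unfold qlap
    ring
  have hDB := qB_fderiv (b := b) (t := t) hf hx x _ _ _ _ _ _ _ _ _ _ rfl rfl rfl rfl rfl rfl rfl rfl rfl rfl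
  have hDA := qA_fderiv (b := b) (t := t) hf hx (gradient f x)
  have hW := qW_pos b t (‖x‖^2)
  have hxx : (inner ℝ x x : ℝ) = ‖x‖^2 := real_inner_self_eq_norm_sq x
  have hsy := q_symm hf x x (gradient f x)
  have hcm := real_inner_comm x (gradient f x)
  have key := q_ident (f x) (inner ℝ x (gradient f x)) (inner ℝ (gradient f x) (gradient f x))
    (qlap f x) (inner ℝ (fderiv ℝ (gradient f) x (gradient f x)) x) (‖x‖^2) (qW b t (‖x‖^2)) b t d hx2
    _ _ _ _ _ (qA b t f x) (qB b t f x) (fderiv ℝ (qA b t f) x (gradient f x)) 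
    (fderiv ℝ (qB b t f) x x) rfl rfl rfl rfl (by unfold qA; ring) (by unfold qB; ring) rfl
    (by rw [hDA]) 
    (by rw [hDB, hsy, hxx, hcm]; field_simp)
  rw [hd]
  set s := ‖x‖^2
  set W := qW b t s
  set g := t * (-1 + 2 * b * s) + ((d:ℝ) - 2) / 2
  set h : ℝ := inner ℝ x (gradient f x)
  set L := qlap f x
  set At := (-2 * t * (-1 + 2 * b * s) * (h + g * f x) - t * (4 * b * s) * f x)
  have e1 : W * s * L^2 - (4*W*L*At-4*W/s*At^2) = W / s * (s * L - 2 * At)^2 := by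
    field_simp; ring
  have e2 : 0 ≤ W / s * (s * L - 2 * At)^2 := by positivity
  have e3 : W/s*(8*t*(4*b*s)*(h+g*f x)^2+(8*t^3*(-1+2*b*s)^2*(4*b*s)-8*t*(4*b*s))*f x^2)
     = W * (32*b*t^3*(-1+2*b*s)^2 - 32*t*b) * f x ^2 + W * (32*t*b)*(h+g*f x)^2 := by
    field_simp
    ring
  have e4 : 0 ≤ W * (32*t*b)*(h+g*f x)^2 := by positivity
  linarith

lemma q_carleman {d : ℕ} {b t : ℝ} {f : QE d → ℝ} (hf : ContDiff ℝ 2 f) (hc : HasCompactSupport f)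
    (h0 : 0 ∉ tsupport f) (hb : 0 < b) (ht : 3 ≤ t) (hs : ∀ x, f x ≠ 0 → ‖x‖^2 ≤ 1/(4*b)) :
    Integrable (fun x => qW b t (‖x‖^2) * f x ^2) ∧
    Integrable (fun x => qW b t (‖x‖^2) * ‖x‖^2 * qlap f x ^2) ∧
    4*b*t^3*∫ x, qW b t (‖x‖^2) * f x ^2 ≤ ∫ x, qW b t (‖x‖^2) * ‖x‖^2 * qlap f x ^2 := by
  have hG : ContDiff ℝ 1 (gradient f) := (q_grad_contDiff hf (by norm_num))
  have hgz : ∀ x, x ∉ tsupport f → f =ᶠ[𝓝 x] fun _ => 0 := fun x hx =>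
    notMem_tsupport_iff_eventuallyEq.1 hx
  have hgg : ∀ x, x ∉ tsupport f → gradient f =ᶠ[𝓝 x] fun _ => 0 := fun x hx => by
    have := (hgz x hx).gradient
    simpa using this
  have hgs : ∀ x, x ∉ tsupport f → gradient f x = 0 := fun x hx => (hgg x hx).eq_of_nhds
  have hfs : ∀ x, x ∉ tsupport f → f x = 0 := fun x hx => (hgz x hx).eq_of_nhds
  have hls : ∀ x, x ∉ tsupport f → qlap f x = 0 := fun x hx => by
    unfold qlap qdiv
    rw [(hgg x hx).fderiv_eq]
    simp
  have hJs : ∀ x, x ∉ tsupport f → qJ b t f x = 0 := fun x hx => by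
    simp [qJ, qB, hgs x hx, hfs x hx]
  have hJts : tsupport (qJ b t f) ⊆ tsupport f := by
    refine closure_minimal (fun x hx => ?_) (isClosed_tsupport f)
    by_contra h
    exact hx (hJs x h)
  have hne : ∀ x ∈ tsupport f, x ≠ 0 := fun x hx h => h0 (h ▸ hx)
  have hJ : ContDiff ℝ 1 (qJ b t f) := by
    refine contDiff_iff_contDiffAt.2 fun x => ?_
    by_cases hx : x ∈ tsupport (qJ b t f)
    swap
    · exact contDiffAt_const.congr_of_eventuallyEq (notMem_tsupport_iff_eventuallyEq.1 hx)
    have hx0 := hne x (hJts hx)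
    exact ((qA_contDiffAt hf hx0).smul hG.contDiffAt).add ((qB_contDiffAt hf hx0).smul contDiffAt_id)
  have hJc : HasCompactSupport (qJ b t f) := hc.of_isClosed_subset (isClosed_tsupport _) hJts
  obtain ⟨hJi, hJ0⟩ := q_int_div hJ hJc
  have hWc : ∀ x ∈ tsupport f, ContinuousAt (fun y : QE d => qW b t (‖y‖^2)) x := fun x hx =>
    (qW_contDiffAt (n := 1) (hne x hx)).continuousAt
  have hlc : Continuous (qlap f) := by
    unfold qlap qdiv
    refine continuous_finsetSum _ fun i _ => ?_
    have := ((hG.continuous_fderiv one_ne_zero).clm_apply (continuous_const (y := EuclideanSpace.single i (1:ℝ))))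
    fun_prop
  have gen : ∀ F : QE d → ℝ, Continuous F → (∀ x, x ∉ tsupport f → F x = 0) →
      Integrable (fun x => qW b t (‖x‖^2) * F x) := by
    intro F hF hz
    have hcs : tsupport (fun x => qW b t (‖x‖^2) * F x) ⊆ tsupport f := by
      refine closure_minimal (fun x hx => ?_) (isClosed_tsupport f)
      by_contra h
      exact hx (by simp [hz x h])
    refine Continuous.integrable_of_hasCompactSupport ?_ (hc.of_isClosed_subset (isClosed_tsupport _) hcs)
    refine continuous_of_tsupport fun x hx => ?_
    exact (hWc x (hcs hx)).mul hF.continuousAt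
  have i1 : Integrable (fun x => qW b t (‖x‖^2) * f x ^2) :=
    gen (fun x => f x^2) (hf.continuous.pow 2) (fun x hx => by simp [hfs x hx])
  have i2 : Integrable (fun x => qW b t (‖x‖^2) * ‖x‖^2 * qlap f x ^2) := by
    have := gen (fun x => ‖x‖^2 * qlap f x^2) (by fun_prop) (fun x hx => by simp [hls x hx])
    refine this.congr (Eventually.of_forall fun x => ?_)
    simp only; ring
  refine ⟨i1, i2, ?_⟩
  have hm : ∫ x, (qdiv (qJ b t f) x + 4*b*t^3*(qW b t (‖x‖^2) * f x ^2))
      ≤ ∫ x, qW b t (‖x‖^2) * ‖x‖^2 * qlap f x ^2 := by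
    refine integral_mono (hJi.add (i1.const_mul _)) i2 fun x => ?_
    have hW := qW_pos b t (‖x‖^2)
    simp only
    by_cases hx : x ∈ tsupport f
    · refine le_trans ?_ (q_pointwise hf (hne x hx) hb.le (by linarith))
      by_cases hfx : f x = 0
      · simp [hfx]
      have hsx := hs x hfx
      have hbs : b * ‖x‖^2 ≤ 1/4 := by
        rw [le_div_iff₀ (by positivity)] at hsx
        linarith
      have hbs0 : 0 ≤ b * ‖x‖^2 := by positivity
      have hp : 1/4 ≤ (-1+2*b*‖x‖^2)^2 := by nlinarith
      have : 4*b*t^3 ≤ 32*b*t^3*(-1+2*b*‖x‖^2)^2 - 32*t*b := by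
        have h1 : 32*b*t^3*(1/4) ≤ 32*b*t^3*(-1+2*b*‖x‖^2)^2 := by gcongr
        have h2 : 0 ≤ b*t*(t^2-9) := by
          have : 0 ≤ t^2 - 9 := by nlinarith
          have : 0 ≤ t := by linarith
          positivity
        have h3 : 0 ≤ b*t := by
          have : 0 ≤ t := by linarith
          positivity
        nlinarith
      have h3 : 4*b*t^3*(qW b t (‖x‖^2) * f x ^2) ≤
          qW b t (‖x‖^2) * (32*b*t^3*(-1+2*b*‖x‖^2)^2 - 32*t*b) * f x ^2 := by
        have := mul_le_mul_of_nonneg_right this (by positivity : 0 ≤ qW b t (‖x‖^2) * f x ^2)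
        linarith
      linarith
    · have hq : qdiv (qJ b t f) x = 0 := by
        have hJx : x ∉ tsupport (qJ b t f) := fun h => hx (hJts h)
        unfold qdiv
        rw [(notMem_tsupport_iff_eventuallyEq.1 hJx).fderiv_eq]
        simp
      rw [hq, hfs x hx, hls x hx]; simp
  rw [integral_add hJi (i1.const_mul _), hJ0, integral_const_mul] at hm
  linarith


lemma q_grad_affine {d : ℕ} {f : QE d → ℝ} (hf : Differentiable ℝ f) (c : ℝ) (a : QE d) :
    gradient (fun x => f (a + c • x)) = fun x => c • gradient f (a + c • x) := by
  ext1 x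
  have h : HasFDerivAt (fun x : QE d => a + c • x) (c • ContinuousLinearMap.id ℝ (QE d)) x :=
    ((hasFDerivAt_id x).const_smul c).const_add a
  have h2 := (hf (a + c • x)).hasFDerivAt.comp x h
  refine ext_inner_right ℝ fun v => ?_
  rw [q_inner_grad, inner_smul_left, q_inner_grad]
  have : fderiv ℝ (fun x => f (a + c • x)) x = _ := h2.fderiv
  rw [this]
  simp

lemma q_div_affine {d : ℕ} {G : QE d → QE d} (hG : Differentiable ℝ G) (c : ℝ) (a x : QE d) :
    qdiv (fun x => G (a + c • x)) x = c * qdiv G (a + c • x) := by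
  have h : HasFDerivAt (fun x : QE d => a + c • x) (c • ContinuousLinearMap.id ℝ (QE d)) x :=
    ((hasFDerivAt_id x).const_smul c).const_add a
  have h2 := (hG (a + c • x)).hasFDerivAt.comp x h
  have : fderiv ℝ (fun x => G (a + c • x)) x = _ := h2.fderiv
  unfold qdiv
  rw [this, Finset.mul_sum]
  simp

lemma q_lap_affine {d : ℕ} {f : QE d → ℝ} (hf : ContDiff ℝ 2 f) (c : ℝ) (a x : QE d) :
    qlap (fun x => f (a + c • x)) x = c^2 * qlap f (a + c • x) := by
  have hG : Differentiable ℝ (gradient f) :=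
    (q_grad_contDiff (m := 1) hf (by norm_num)).differentiable one_ne_zero
  unfold qlap
  rw [q_grad_affine (hf.differentiable (by norm_num))]
  have hd : Differentiable ℝ (fun x => gradient f (a + c • x)) := by fun_prop
  rw [q_div_smul (A := fun _ => c) (G := fun x => gradient f (a + c • x)) (by fun_prop) (hd x),
    q_div_affine hG]
  simp
  ring

lemma q_grad_mul {d : ℕ} {f g : QE d → ℝ} (hf : Differentiable ℝ f) (hg : Differentiable ℝ g) :
    gradient (fun x => f x * g x) = fun x => f x • gradient g x + g x • gradient f x := by
  ext1 x
  refine ext_inner_right ℝ fun v => ?_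
  have := ((hf x).hasFDerivAt.mul (hg x).hasFDerivAt).fderiv
  have h : fderiv ℝ (fun x => f x * g x) x = _ := this
  rw [q_inner_grad, inner_add_left, inner_smul_left, inner_smul_left, q_inner_grad, q_inner_grad, h]
  simp

lemma q_grad_sub {d : ℕ} {f g : QE d → ℝ} (hf : Differentiable ℝ f) (hg : Differentiable ℝ g) :
    gradient (fun x => f x - g x) = fun x => gradient f x - gradient g x := by
  ext1 x
  refine ext_inner_right ℝ fun v => ?_
  have h : fderiv ℝ (fun x => f x - g x) x = _ := fderiv_sub (hf x) (hg x)
  rw [q_inner_grad, inner_sub_left, q_inner_grad, q_inner_grad, h]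
  simp

lemma q_lap_sub {d : ℕ} {f g : QE d → ℝ} (hf : ContDiff ℝ 2 f) (hg : ContDiff ℝ 2 g) (x : QE d) :
    qlap (fun x => f x - g x) x = qlap f x - qlap g x := by
  have hG : Differentiable ℝ (gradient f) :=
    (q_grad_contDiff (m := 1) hf (by norm_num)).differentiable one_ne_zero
  have hG' : Differentiable ℝ (gradient g) :=
    (q_grad_contDiff (m := 1) hg (by norm_num)).differentiable one_ne_zero
  unfold qlap
  rw [q_grad_sub (hf.differentiable (by norm_num)) (hg.differentiable (by norm_num))]
  unfold qdiv
  have h : fderiv ℝ (fun x => gradient f x - gradient g x) x = _ := fderiv_sub (hG x) (hG' x)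
  rw [h]
  simp

lemma q_lap_mul {d : ℕ} {f g : QE d → ℝ} (hf : ContDiff ℝ 2 f) (hg : ContDiff ℝ 2 g) (x : QE d) :
    qlap (fun x => f x * g x) x = f x * qlap g x + 2 * inner ℝ (gradient f x) (gradient g x)
      + g x * qlap f x := by
  have hf1 := hf.differentiable (by norm_num)
  have hg1 := hg.differentiable (by norm_num)
  have hG : Differentiable ℝ (gradient f) :=
    (q_grad_contDiff (m := 1) hf (by norm_num)).differentiable one_ne_zero
  have hG' : Differentiable ℝ (gradient g) :=
    (q_grad_contDiff (m := 1) hg (by norm_num)).differentiable one_ne_zero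
  unfold qlap
  rw [q_grad_mul hf1 hg1, q_div_add (G := fun x => f x • gradient g x)
    (H := fun x => g x • gradient f x) ((hg1 x).smul (hG x)) ((hf1 x).smul (hG' x)),
    q_div_smul (hf1 x) (hG' x), q_div_smul (hg1 x) (hG x), ← q_inner_grad, ← q_inner_grad,
    real_inner_comm (gradient f x) (gradient g x)]
  ring

lemma q_lap_cont {d : ℕ} {f : QE d → ℝ} (hf : ContDiff ℝ 2 f) : Continuous (qlap f) := by
  have hG : ContDiff ℝ 1 (gradient f) := (q_grad_contDiff hf (by norm_num))
  unfold qlap qdiv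
  refine continuous_finsetSum _ fun i _ => ?_
  have := ((hG.continuous_fderiv one_ne_zero).clm_apply (continuous_const (y := EuclideanSpace.single i (1:ℝ))))
  fun_prop

lemma q_grad_of_ev {d : ℕ} {f : QE d → ℝ} {c : ℝ} {x : QE d} (h : f =ᶠ[𝓝 x] fun _ => c) :
    gradient f x = 0 ∧ qlap f x = 0 := by
  have h1 : gradient f =ᶠ[𝓝 x] fun _ => 0 := by
    have := h.gradient
    simpa using this
  refine ⟨h1.eq_of_nhds, ?_⟩
  unfold qlap qdiv
  rw [h1.fderiv_eq]
  simp

lemma q_cutoff (d : ℕ) : ∃ K > (0:ℝ), ∀ ρ : ℝ, 1/4 ≤ ρ → ∃ η : QE d → ℝ, ContDiff ℝ 2 η ∧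
    (∀ x, 0 ≤ η x ∧ η x ≤ 1) ∧ (∀ x, ‖x‖ ≤ ρ → η x = 1) ∧ (∀ x, 2*ρ ≤ ‖x‖ → η x = 0) ∧
    (∀ x, ‖gradient η x‖ ≤ K) ∧ (∀ x, |qlap η x| ≤ K) := by
  let g : ContDiffBump (0 : QE d) := ⟨1, 2, by norm_num, by norm_num⟩
  have hg : ContDiff ℝ 2 g := g.contDiff
  have hts : tsupport g ⊆ closedBall 0 2 := g.tsupport_eq.le
  have hz : ∀ x : QE d, x ∉ tsupport g → gradient g x = 0 ∧ qlap g x = 0 := fun x hx =>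
    q_grad_of_ev (notMem_tsupport_iff_eventuallyEq.1 hx)
  have hcpt : IsCompact (tsupport g) := g.hasCompactSupport
  obtain ⟨K1, hK1⟩ := hcpt.exists_bound_of_continuousOn
    ((q_grad_contDiff (m := 1) hg (by norm_num)).continuous.continuousOn)
  obtain ⟨K2, hK2⟩ := hcpt.exists_bound_of_continuousOn (q_lap_cont hg).continuousOn
  have b1 : ∀ x, ‖gradient g x‖ ≤ |K1| := fun x => by
    by_cases h : x ∈ tsupport g
    · exact (hK1 x h).trans (le_abs_self _)
    · simp [(hz x h).1]
  have b2 : ∀ x, |qlap g x| ≤ |K2| := fun x => by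
    by_cases h : x ∈ tsupport g
    · exact (hK2 x h).trans (le_abs_self _)
    · simp [(hz x h).2]
  refine ⟨4 * |K1| + 16 * |K2| + 1, by positivity, fun ρ hρ => ?_⟩
  have hρ0 : 0 < ρ := by linarith
  have hinv : ρ⁻¹ ≤ 4 := by
    rw [inv_le_comm₀ hρ0 (by norm_num)]; linarith
  have hip : 0 < ρ⁻¹ := by positivity
  have hn : ∀ x : QE d, ‖0 + ρ⁻¹ • x‖ = ‖x‖ / ρ := fun x => by
    rw [zero_add, norm_smul, Real.norm_of_nonneg hip.le]; field_simp
  refine ⟨fun x => g (0 + ρ⁻¹ • x), by fun_prop, fun x => ⟨g.nonneg, g.le_one⟩, ?_, ?_, ?_, ?_⟩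
  · intro x hx
    refine g.one_of_mem_closedBall ?_
    rw [mem_closedBall_zero_iff, hn]
    exact (div_le_one hρ0).2 hx
  · intro x hx
    refine g.zero_of_le_dist ?_
    rw [dist_zero_right, hn]
    exact (le_div_iff₀ hρ0).2 hx
  · intro x
    rw [q_grad_affine (hg.differentiable (by norm_num))]
    simp only
    rw [norm_smul, Real.norm_of_nonneg hip.le]
    have := mul_le_mul hinv (b1 (0 + ρ⁻¹ • x)) (norm_nonneg _) (by norm_num)
    have h2 := abs_nonneg K2
    linarith
  · intro x
    rw [q_lap_affine hg, abs_mul, abs_of_nonneg (by positivity)]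
    have h16 : ρ⁻¹^2 ≤ 16 := by nlinarith
    have := mul_le_mul h16 (b2 (0 + ρ⁻¹ • x)) (abs_nonneg _) (by norm_num)
    have h2 := abs_nonneg K1
    linarith


lemma q_cacc (d : ℕ) : ∃ K > (0:ℝ), ∀ ρ : ℝ, 1/4 ≤ ρ → ∀ u1 u2 : QE d → ℝ, ContDiff ℝ 2 u1 →
    ContDiff ℝ 2 u2 → (∀ x, qlap u1 x ^2 + qlap u2 x ^2 ≤ u1 x ^2 + u2 x^2) → ∀ M : ℝ,
    (∀ x, ‖x‖ < 2*ρ → u1 x^2 + u2 x^2 ≤ M^2) →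
    ∫ x in closedBall 0 ρ, (‖gradient u1 x‖^2 + ‖gradient u2 x‖^2 + u1 x^2 + u2 x^2)
      ≤ K * ρ^d * M^2 := by
  obtain ⟨K, hK, hcut⟩ := q_cutoff d
  refine ⟨(3+4*K^2) * 2^d * (volume.real (closedBall (0:QE d) 1) + 1), by positivity, ?_⟩
  intro ρ hρ u1 u2 h1 h2 hlap M hM
  have hρ0 : 0 < ρ := by linarith
  obtain ⟨η, hη, hη01, hη1, hη0, hηg, -⟩ := hcut ρ hρ
  have gc1 : ContDiff ℝ 1 (gradient u1) := q_grad_contDiff h1 (by norm_num)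
  have gc2 : ContDiff ℝ 1 (gradient u2) := q_grad_contDiff h2 (by norm_num)
  have hη' : ContDiff ℝ 1 η := hη.of_le (by norm_num)
  have h1' : ContDiff ℝ 1 u1 := h1.of_le (by norm_num)
  have h2' : ContDiff ℝ 1 u2 := h2.of_le (by norm_num)
  have hηc : HasCompactSupport η := by
    refine HasCompactSupport.intro (isCompact_closedBall (0:QE d) (2*ρ)) fun x hx => hη0 x ?_
    rw [mem_closedBall_zero_iff] at hx
    linarith
  have main : ∀ u : QE d → ℝ, ContDiff ℝ 2 u → 
      let J := fun x => (η x * (η x * u x)) • gradient u x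
      Integrable (qdiv J) ∧ ∫ x, qdiv J x = 0 ∧ ∀ x, η x^2 * ‖gradient u x‖^2 ≤ 
       2 * qdiv J x - 2 * (η x^2 * (u x * qlap u x)) + 4*K^2 * u x^2 ∧ 
       (η x = 0 → qdiv J x = 0) := by
    intro u hu J
    have hG : ContDiff ℝ 1 (gradient u) := q_grad_contDiff hu (by norm_num)
    have hu' : ContDiff ℝ 1 u := hu.of_le (by norm_num)
    have hJ : ContDiff ℝ 1 J := by fun_prop
    have hJc : HasCompactSupport J := (hηc.mul_right (f' := fun x => η x * u x)).smul_right (f' := gradient u)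
    obtain ⟨i1, i2⟩ := q_int_div hJ hJc
    have hdv : ∀ x, qdiv J x = η x^2 * ‖gradient u x‖^2 + 2 * η x * u x * inner ℝ (gradient η x) (gradient u x)
        + η x^2 * (u x * qlap u x) := by
      intro x
      have d1 := hη'.differentiable one_ne_zero
      have d2 := hu'.differentiable one_ne_zero
      have d3 := hG.differentiable one_ne_zero
      rw [q_div_smul (A := fun x => (η x * (η x * u x))) (by fun_prop) (d3 x), ← q_inner_grad,
        q_grad_mul d1 (by fun_prop), q_grad_mul d1 d2]
      simp only [inner_add_left, inner_smul_left, smul_add, real_inner_self_eq_norm_sq, qlap]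
      simp only [conj_trivial]
      ring
    refine ⟨i1, i2, fun x => ⟨?_, ?_⟩⟩
    · rw [hdv x]
      have hcs : |(inner ℝ (gradient η x) (gradient u x) : ℝ)| ≤ K * ‖gradient u x‖ :=
        (abs_real_inner_le_norm _ _).trans (by gcongr; exact hηg x)
      set I : ℝ := inner ℝ (gradient η x) (gradient u x)
      have hI2 : (η x * I)^2 ≤ η x^2 * (K * ‖gradient u x‖)^2 := by
        rw [mul_pow]
        refine mul_le_mul_of_nonneg_left ?_ (sq_nonneg _)
        exact sq_le_sq' (by linarith [neg_abs_le I]) (by linarith [le_abs_self I])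
      -- 4 η u I ≥ - (η I)^2/K^2 - 4 K^2 u^2
      have e : 0 ≤ (η x * I / K + 2 * K * u x)^2 := sq_nonneg _
      have e2 : (η x * I / K + 2 * K * u x)^2 = (η x * I)^2/K^2 + 4 * η x * u x * I + 4 * K^2 * u x^2 := by
        field_simp; ring
      have e3 : (η x * I)^2/K^2 ≤ η x^2 * ‖gradient u x‖^2 := by
        rw [div_le_iff₀ (by positivity)]
        calc _ ≤ _ := hI2
          _ = _ := by ring
      linarith
    · intro h
      rw [hdv x, h]; simp
  obtain ⟨a1, a2, a3⟩ := main u1 h1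
  obtain ⟨b1, b2, b3⟩ := main u2 h2
  set J1 := fun x => (η x * (η x * u1 x)) • gradient u1 x
  set J2 := fun x => (η x * (η x * u2 x)) • gradient u2 x
  have hfin : volume (closedBall (0:QE d) (2*ρ)) ≠ ∞ := measure_closedBall_lt_top.ne
  have ic : Integrable (fun x => (closedBall (0:QE d) (2*ρ)).indicator (fun _ => (3+4*K^2)*M^2) x) := by
    rw [integrable_indicator_iff measurableSet_closedBall]
    exact integrableOn_const hfin
  have hpt : ∀ x, (closedBall (0:QE d) ρ).indicator 
      (fun x => (‖gradient u1 x‖^2 + ‖gradient u2 x‖^2 + u1 x^2 + u2 x^2)) x ≤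
      2 * qdiv J1 x + 2 * qdiv J2 x + (closedBall (0:QE d) (2*ρ)).indicator (fun _ => (3+4*K^2)*M^2) x := by
    intro x
    by_cases hx2 : ‖x‖ < 2*ρ
    · have hmem : x ∈ closedBall (0:QE d) (2*ρ) := by simpa using hx2.le
      rw [indicator_of_mem hmem]
      have p1 := (a3 x).1
      have p2 := (b3 x).1
      have q1 := hlap x
      have q2 := hM x hx2
      obtain ⟨e0, e1⟩ := hη01 x
      have hη2 : η x^2 ≤ 1 := by nlinarith
      have r : -(u1 x * qlap u1 x + u2 x * qlap u2 x) ≤ M^2 := by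
        nlinarith [sq_nonneg (u1 x + qlap u1 x), sq_nonneg (u2 x + qlap u2 x)]
      have r2 : -(η x^2*(u1 x * qlap u1 x) + η x^2*(u2 x * qlap u2 x)) ≤ M^2 := by
        have := mul_le_mul_of_nonneg_left r (sq_nonneg (η x))
        have := mul_le_mul_of_nonneg_right hη2 (sq_nonneg M)
        linarith
      have r3 : 4*K^2*(u1 x^2+u2 x^2) ≤ 4*K^2*M^2 := by gcongr
      by_cases hx1 : ‖x‖ ≤ ρ
      · rw [indicator_of_mem (by simpa using hx1)]
        rw [hη1 x hx1] at p1 p2 r2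
        linarith
      · rw [indicator_of_notMem (by simpa using hx1)]
        have : 0 ≤ η x^2 * ‖gradient u1 x‖^2 := by positivity
        have : 0 ≤ η x^2 * ‖gradient u2 x‖^2 := by positivity
        have : 0 ≤ M^2 := by positivity
        linarith
    · have hz := hη0 x (not_lt.1 hx2)
      rw [indicator_of_notMem (by simp; linarith), (a3 x).2 hz, (b3 x).2 hz]
      have : 0 ≤ (closedBall (0:QE d) (2*ρ)).indicator (fun _ => (3+4*K^2)*M^2) x :=
        indicator_nonneg (fun _ _ => by positivity) x
      linarith
  have gcc1 := gc1.continuous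
  have gcc2 := gc2.continuous
  have hcc1 := h1.continuous
  have hcc2 := h2.continuous
  have il : Integrable ((closedBall (0:QE d) ρ).indicator 
      (fun x => (‖gradient u1 x‖^2 + ‖gradient u2 x‖^2 + u1 x^2 + u2 x^2))) := by
    rw [integrable_indicator_iff measurableSet_closedBall]
    exact Continuous.continuousOn (by fun_prop) |>.integrableOn_compact (isCompact_closedBall _ _)
  have hm := integral_mono il (((a1.const_mul 2).add (b1.const_mul 2)).add ic) hpt
  rw [integral_indicator measurableSet_closedBall] at hm
  have hr : ∫ x, (2 * qdiv J1 x + 2 * qdiv J2 x + (closedBall (0:QE d) (2*ρ)).indicator (fun _ => (3+4*K^2)*M^2) x)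
     = volume.real (closedBall (0:QE d) (2*ρ)) * ((3+4*K^2)*M^2) := by
    have iab : Integrable (fun x => 2 * qdiv J1 x + 2 * qdiv J2 x) :=
      (a1.const_mul 2).add (b1.const_mul 2)
    rw [integral_add iab ic,
      integral_add (a1.const_mul 2) (b1.const_mul 2), integral_const_mul, integral_const_mul, a2, b2,
      integral_indicator measurableSet_closedBall, setIntegral_const]
    simp
  have hm' := hm.trans hr.le
  rw [Measure.addHaar_real_closedBall' _ _ (by positivity)] at hm'
  simp only [finrank_euclideanSpace, Fintype.card_fin] at hm'
  refine hm'.trans ?_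
  have : 0 ≤ (3+4*K^2) * 2^d * ρ^d * M^2 := by positivity
  rw [mul_pow]
  nlinarith


noncomputable def qP (s : ℝ) : ℝ := ∫ r in (0:ℝ)..s, max r 0

lemma qP_deriv (s : ℝ) : HasDerivAt qP (max s 0) s := by
  have hc : Continuous (fun r : ℝ => max r 0) := by fun_prop
  exact intervalIntegral.integral_hasDerivAt_right (hc.intervalIntegrable _ _)
    (hc.stronglyMeasurableAtFilter _ _) hc.continuousAt

lemma qP_contDiff : ContDiff ℝ 1 qP := by
  rw [contDiff_one_iff_deriv]
  refine ⟨fun s => (qP_deriv s).differentiableAt, ?_⟩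
  have : deriv qP = fun s => max s 0 := by ext s; exact (qP_deriv s).deriv
  rw [this]; fun_prop

lemma qP_zero {s : ℝ} (hs : s ≤ 0) : qP s = 0 := by
  unfold qP
  rw [intervalIntegral.integral_symm, intervalIntegral.integral_congr (g := fun _ => (0:ℝ))]
  · simp
  · intro r hr
    rw [uIcc_of_le hs] at hr
    exact max_eq_right hr.2

noncomputable def qTh {d : ℕ} (y : QE d) : ℝ := qP (1 - ‖y‖^2)
noncomputable def qEt {d : ℕ} (y : QE d) : ℝ := 2 * max (1 - ‖y‖^2) 0

lemma qTh_contDiff {d : ℕ} : ContDiff ℝ 1 (qTh (d := d)) :=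
  qP_contDiff.comp (contDiff_const.sub (contDiff_norm_sq ℝ))

lemma qTh_fderiv {d : ℕ} (y v : QE d) : fderiv ℝ qTh y v = - qEt y * inner ℝ y v := by
  have h := (qP_deriv (1 - ‖y‖^2)).comp_hasFDerivAt y
    ((hasStrictFDerivAt_norm_sq y).hasFDerivAt.const_sub 1)
  have h' : fderiv ℝ (qTh (d := d)) y = _ := h.fderiv
  rw [h']
  simp [qEt]
  ring

lemma qTh_cs {d : ℕ} : HasCompactSupport (qTh (d := d)) := by
  refine HasCompactSupport.intro (isCompact_closedBall (0:QE d) 1) fun x hx => qP_zero ?_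
  simp at hx
  nlinarith

lemma qEt_zero {d : ℕ} {x : QE d} (hx : 1 ≤ ‖x‖) : qEt x = 0 := by
  unfold qEt
  rw [max_eq_right (by nlinarith)]; simp

lemma qEt_cs {d : ℕ} : HasCompactSupport (qEt (d := d)) := by
  refine HasCompactSupport.intro (isCompact_closedBall (0:QE d) 1) fun x hx => qEt_zero ?_
  simp at hx
  exact hx.le

lemma qEt_cont {d : ℕ} : Continuous (qEt (d := d)) := by
  unfold qEt; fun_prop

lemma qEt_nonneg {d : ℕ} (x : QE d) : 0 ≤ qEt x := by
  unfold qEt; positivity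

lemma qEt_le {d : ℕ} (x : QE d) : qEt x ≤ 2 := by
  unfold qEt
  have : max (1 - ‖x‖^2) 0 ≤ 1 := max_le (by nlinarith [norm_nonneg x]) (by norm_num)
  linarith

lemma qEt_int_pos {d : ℕ} : 0 < ∫ y, qEt (d := d) y := by
  refine qEt_cont.integral_pos_of_hasCompactSupport_nonneg_nonzero qEt_cs qEt_nonneg (x := 0) ?_
  simp [qEt]

/-- the derivative of the scaled means -/
lemma q_mean_deriv {d : ℕ} {w : QE d → ℝ} (hw : ContDiff ℝ 2 w) (a : QE d) (r : ℝ) :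
    HasDerivAt (fun r : ℝ => ∫ y, qEt y * w (a + r • y)) (r * ∫ y, qTh y * qlap w (a + r • y)) r := by
  have hG : ContDiff ℝ 1 (gradient w) := q_grad_contDiff hw (by norm_num)
  have hGc := hG.continuous
  have hwc := hw.continuous
  have hec := qEt_cont (d := d)
  have hlc := q_lap_cont hw
  have htc := (qTh_contDiff (d := d)).continuous
  -- integration by parts
  have hJ : ContDiff ℝ 1 (fun y => qTh y • gradient w (a + r • y)) := by
    have := qTh_contDiff (d := d)
    fun_prop
  have hJc : HasCompactSupport (fun y => qTh y • gradient w (a + r • y)) :=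
    (qTh_cs (d := d)).smul_right (f' := fun y => gradient w (a + r • y))
  obtain ⟨-, hJ0⟩ := q_int_div hJ hJc
  have hdv : ∀ y, qdiv (fun y => qTh y • gradient w (a + r • y)) y =
      - (qEt y * inner ℝ (gradient w (a + r • y)) y) + r * (qTh y * qlap w (a + r • y)) := by
    intro y
    have hd : Differentiable ℝ (gradient w) := hG.differentiable one_ne_zero
    rw [q_div_smul (A := qTh) (G := fun y => gradient w (a + r • y))
      (qTh_contDiff.differentiable one_ne_zero y) (by fun_prop), q_div_affine hd, qTh_fderiv,
      real_inner_comm]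
    unfold qlap
    ring
  have iE : Integrable (fun y => qEt y * inner ℝ (gradient w (a + r • y)) y) :=
    Continuous.integrable_of_hasCompactSupport (by fun_prop) (qEt_cs.mul_right)
  have iT : Integrable (fun y => qTh y * qlap w (a + r • y)) :=
    Continuous.integrable_of_hasCompactSupport (by fun_prop) (qTh_cs.mul_right)
  have heq : ∫ y, qEt y * inner ℝ (gradient w (a + r • y)) y = r * ∫ y, qTh y * qlap w (a + r • y) := by
    simp_rw [hdv] at hJ0
    have iEn : Integrable (fun y => -(qEt y * inner ℝ (gradient w (a + r • y)) y)) := iE.neg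
    rw [integral_add iEn (iT.const_mul r), integral_neg, integral_const_mul] at hJ0
    linarith
  rw [← heq]
  -- bound
  have hcpt : IsCompact (closedBall r 1 ×ˢ closedBall (0:QE d) 1) :=
    (isCompact_closedBall _ _).prod (isCompact_closedBall _ _)
  obtain ⟨K, hK⟩ := hcpt.exists_bound_of_continuousOn
    (f := fun p : ℝ × QE d => qEt p.2 * inner ℝ (gradient w (a + p.1 • p.2)) p.2)
    (Continuous.continuousOn (by fun_prop))
  refine (hasDerivAt_integral_of_dominated_loc_of_deriv_le (μ := volume)
    (F := fun r y => qEt y * w (a + r • y))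
    (F' := fun r y => qEt y * inner ℝ (gradient w (a + r • y)) y)
    (bound := (closedBall (0:QE d) 1).indicator fun _ => K) (ball_mem_nhds r one_pos) ?_ ?_ ?_ ?_ ?_ ?_).2
  · exact Eventually.of_forall fun s => Continuous.aestronglyMeasurable (by fun_prop)
  · exact Continuous.integrable_of_hasCompactSupport (by fun_prop) (qEt_cs.mul_right)
  · exact Continuous.aestronglyMeasurable (by fun_prop)
  · refine Eventually.of_forall fun y s hs => ?_
    by_cases hy : y ∈ closedBall (0:QE d) 1
    · rw [indicator_of_mem hy]
      exact hK (s, y) ⟨ball_subset_closedBall hs, hy⟩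
    · rw [indicator_of_notMem hy, qEt_zero (by simp at hy; exact hy.le)]
      simp
  · rw [integrable_indicator_iff measurableSet_closedBall]
    exact integrableOn_const measure_closedBall_lt_top.ne
  · refine Eventually.of_forall fun y s hs => ?_
    have h1 : HasDerivAt (fun s : ℝ => a + s • y) y s := by
      simpa using ((hasDerivAt_id s).smul_const y).const_add a
    have h2 := (hw.differentiable (by norm_num) (a + s • y)).hasFDerivAt.comp_hasDerivAt s h1
    rw [q_inner_grad]
    exact h2.const_mul (qEt y)

lemma q_mean (d : ℕ) (C₀ : ℝ) (hC₀ : 0 < C₀) : ∃ c > (0:ℝ), ∀ w : QE d → ℝ, ContDiff ℝ 2 w → ∀ a,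
    w a = 1 → (∀ x, |qlap w x| ≤ C₀) → c ≤ ∫ x in ball a 1, w x ^ 2 := by
  set I := ∫ y, qEt (d := d) y
  set T := ∫ y, |qTh (d := d) y|
  have hI : 0 < I := qEt_int_pos
  have hT : 0 ≤ T := integral_nonneg fun _ => abs_nonneg _
  set δ := min 1 (I / (2 * (C₀ * T + 1)))
  have hδ0 : 0 < δ := by
    apply lt_min one_pos; positivity
  have hδ1 : δ ≤ 1 := min_le_left _ _
  have hδ2 : δ * (C₀ * T) ≤ I / 2 := by
    have h : δ ≤ I / (2 * (C₀ * T + 1)) := min_le_right _ _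
    rw [le_div_iff₀ (by positivity)] at h
    nlinarith
  refine ⟨δ^d * I / 8, by positivity, fun w hw a hwa hlap => ?_⟩
  have hwc := hw.continuous
  have hec := qEt_cont (d := d)
  have iTh : Integrable (fun y : QE d => |qTh y|) :=
    (qTh_contDiff.continuous.integrable_of_hasCompactSupport qTh_cs).abs
  have hΦ : ‖(∫ y, qEt y * w (a + δ • y)) - ∫ y, qEt y * w (a + (0:ℝ) • y)‖ ≤ C₀ * T * (δ - 0) := by
    refine norm_image_sub_le_of_norm_deriv_le_segment' (a := 0) (b := δ)
      (f := fun r : ℝ => ∫ y, qEt y * w (a + r • y)) (fun r _ => (q_mean_deriv hw a r).hasDerivWithinAt)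
      (fun r hr => ?_) δ (right_mem_Icc.2 hδ0.le)
    rw [norm_mul, Real.norm_of_nonneg hr.1]
    have hr1 : r ≤ 1 := by linarith [hr.2]
    have hb : ‖∫ y, qTh y * qlap w (a + r • y)‖ ≤ C₀ * T := by
      rw [← integral_const_mul]
      refine norm_integral_le_of_norm_le (iTh.const_mul C₀) (Eventually.of_forall fun y => ?_)
      rw [norm_mul, Real.norm_eq_abs, Real.norm_eq_abs, mul_comm]
      gcongr
      exact hlap _
    calc r * _ ≤ 1 * (C₀ * T) := by gcongr
      _ = _ := one_mul _
  have h0 : ∫ y, qEt y * w (a + (0:ℝ) • y) = I := by simp [hwa, I]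
  rw [h0, Real.norm_eq_abs] at hΦ
  have h1 : I / 2 ≤ ∫ y, qEt y * w (a + δ • y) := by
    have := neg_abs_le ((∫ y, qEt y * w (a + δ • y)) - I)
    linarith
  have i1 : Integrable (fun y => qEt y * w (a + δ • y)) :=
    Continuous.integrable_of_hasCompactSupport (by fun_prop) (qEt_cs.mul_right)
  have i2 : Integrable (qEt (d := d)) := hec.integrable_of_hasCompactSupport qEt_cs
  set F : QE d → ℝ := (ball a 1).indicator (fun x => w x^2)
  have iF : Integrable F := by
    rw [integrable_indicator_iff measurableSet_ball]
    exact (Continuous.continuousOn (by fun_prop) |>.integrableOn_compact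
      (isCompact_closedBall a 1)).mono_set ball_subset_closedBall
  have iF2 : Integrable (fun y => F (a + δ • y)) :=
    (iF.comp_add_left a).comp_smul hδ0.ne'
  have h2 : ∫ y, qEt y * w (a + δ • y) ≤ ∫ y, (1/4 * qEt y + 2 * F (a + δ • y)) := by
    refine integral_mono i1 ((i2.const_mul _).add (iF2.const_mul _)) fun y => ?_
    simp only
    have e0 := qEt_nonneg y
    have e2 := qEt_le y
    by_cases hy : ‖y‖ < 1
    · have hm : a + δ • y ∈ ball a 1 := by
        rw [mem_ball, dist_eq_norm, add_sub_cancel_left, norm_smul, Real.norm_of_nonneg hδ0.le]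
        nlinarith [norm_nonneg y]
      have : F (a + δ • y) = w (a + δ • y)^2 := indicator_of_mem hm _
      rw [this]
      have p1 := mul_nonneg e0 (sq_nonneg (w (a + δ • y) - 1/2))
      have p2 := mul_le_mul_of_nonneg_right e2 (sq_nonneg (w (a + δ • y)))
      nlinarith
    · rw [qEt_zero (not_lt.1 hy)]
      have : 0 ≤ F (a + δ • y) := indicator_nonneg (fun _ _ => sq_nonneg _) _
      linarith
  rw [integral_add (i2.const_mul _) (iF2.const_mul _), integral_const_mul, integral_const_mul,
    Measure.integral_comp_smul volume (fun y => F (a + y)), integral_add_left_eq_self,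
    finrank_euclideanSpace, Fintype.card_fin, abs_of_pos (by positivity), smul_eq_mul] at h2
  have h3 : ∫ x, F x = ∫ x in ball a 1, w x^2 := integral_indicator measurableSet_ball
  rw [← h3]
  have h4 : I / 8 ≤ (δ^d)⁻¹ * ∫ x, F x := by
    change _ ≤ 1/4 * I + _ at h2
    linarith
  rw [inv_mul_eq_div, le_div_iff₀ (by positivity)] at h4
  linarith


lemma qW_anti {b t s1 s2 : ℝ} (ht : 0 ≤ t) (h1 : 0 < s1) (h12 : s1 ≤ s2) (h2 : 2 * b * s2 ≤ 1) :
    qW b t s2 ≤ qW b t s1 := by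
  unfold qW
  rw [Real.exp_le_exp]
  have hs2 : 0 < s2 := by linarith
  have h := Real.one_sub_inv_le_log_of_pos (x := s2 / s1) (by positivity)
  rw [Real.log_div hs2.ne' h1.ne', inv_div] at h
  have e : 2 * b * (s2 - s1) ≤ 1 - s1 / s2 := by
    have : 1 - s1/s2 = (s2 - s1) / s2 := by field_simp
    rw [this, le_div_iff₀ hs2]
    nlinarith [mul_nonneg (sub_nonneg.2 h2) (sub_nonneg.2 h12)]
  nlinarith [mul_le_mul_of_nonneg_left (e.trans h) ht]

lemma qW_ratio {R t : ℝ} (hR : 1 ≤ R) (ht : R ≤ t) :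
    qW (1/(256*R^2)) t (16*R^2) ≤ qW (1/(256*R^2)) t ((R+1)^2) * Real.exp (-R) := by
  unfold qW
  rw [← Real.exp_add, Real.exp_le_exp]
  have hR0 : 0 < R := by linarith
  have hl : Real.log 4 + Real.log ((R+1)^2) ≤ Real.log (16*R^2) := by
    rw [← Real.log_mul (by norm_num) (by positivity)]
    exact Real.log_le_log (by positivity) (by nlinarith)
  have h4 : (1.38:ℝ) ≤ Real.log 4 := by
    have : (4:ℝ) = 2^2 := by norm_num
    rw [this, Real.log_pow]
    have := Real.log_two_gt_d9
    norm_num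
    linarith
  have e1 : 2 * t * (1/(256*R^2)) * (16*R^2) = t / 8 := by field_simp; norm_num; try ring
  have e2 : 0 ≤ 2 * t * (1/(256*R^2)) * (R+1)^2 := by
    have : 0 ≤ t := by linarith
    positivity
  rw [e1]
  have ht0 : 0 ≤ t := by linarith
  nlinarith [mul_le_mul_of_nonneg_left hl ht0, mul_le_mul_of_nonneg_left h4 ht0]

lemma q_err {K c L1 u l i g : ℝ} (hK : 0 ≤ K) (hi : |i| ≤ K * g) (hl : |l| ≤ K) :
    (c * L1 + 2 * i + u * l)^2 ≤ 2 * (c^2 * L1^2) + 16 * K^2 * (g^2 + u^2) := by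
  have h1 : i^2 ≤ (K*g)^2 := sq_le_sq' (by linarith [neg_abs_le i]) (by linarith [le_abs_self i])
  have h2 : l^2 ≤ K^2 := sq_le_sq' (by linarith [neg_abs_le l]) (by linarith [le_abs_self l])
  have h3 : u^2 * l^2 ≤ u^2 * K^2 := by gcongr
  nlinarith [sq_nonneg (c*L1 - (2*i+u*l)), sq_nonneg (2*i - u*l), mul_nonneg (sq_nonneg K) (sq_nonneg u)]

set_option maxHeartbeats 4000000 in
lemma q_core (d : ℕ) (C₀ : ℝ) (hC₀ : 0 < C₀) : ∃ c > (0:ℝ), ∃ R₁ : ℝ, ∀ R : ℝ, R₁ ≤ R → 4 ≤ R →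
    ∀ t : ℝ, t^3 = 2^15 * R^4 → R ≤ t → ∀ u1 u2 : QE d → ℝ, ContDiff ℝ 2 u1 → ContDiff ℝ 2 u2 →
    (∀ x, qlap u1 x ^2 + qlap u2 x ^2 ≤ u1 x ^2 + u2 x^2) →
    (∀ x, u1 x^2 + u2 x^2 ≤ C₀^2) → ∀ a, ‖a‖ = R → u1 a = 1 → ∀ m : ℝ,
    (∀ x, ‖x‖ < 1 → u1 x^2 + u2 x^2 ≤ m^2) →
    c * qW (1/(256*R^2)) t ((R+1)^2) ≤ m^2 * qW (1/(256*R^2)) t (1/16) := by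
  obtain ⟨K, hK, hcut⟩ := q_cutoff d
  obtain ⟨K', hK', hcacc⟩ := q_cacc d
  obtain ⟨c0, hc0, hmean⟩ := q_mean d C₀ hC₀
  have hlim : Tendsto (fun R : ℝ => 12*K^2*K' * (8^d * C₀^2) * (R^d * Real.exp (-R))) atTop (𝓝 (12*K^2*K' * (8^d * C₀^2) * 0)) :=
    (Real.tendsto_pow_mul_exp_neg_atTop_nhds_zero d).const_mul _
  rw [mul_zero] at hlim
  obtain ⟨R₁, hR₁⟩ := eventually_atTop.1 (hlim.eventually (gt_mem_nhds (half_pos hc0)))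
  refine ⟨c0 / 2 / (12*K^2*K'), by positivity, R₁, ?_⟩
  intro R hRR hR t ht hRt u1 u2 h1 h2 hlap hbd a ha hua m hm
  have hsmall := hR₁ R hRR
  have hR0 : 0 < R := by linarith
  obtain ⟨η, hη, hη01, hη1, hη0, hηg, hηl⟩ := hcut (4*R) (by linarith)
  obtain ⟨ζ, hζ, hζ01, hζ1, hζ0, hζg, hζl⟩ := hcut (1/4) le_rfl
  set b := 1/(256*R^2)
  have hb : 0 < b := by positivity
  have hb4 : 1/(4*b) = 64*R^2 := by simp only [b]; field_simp; norm_num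
  have hbR : b * R^2 = 1/256 := by simp only [b]; field_simp
  set χ : QE d → ℝ := fun x => η x - ζ x
  have hχ : ContDiff ℝ 2 χ := hη.sub hζ
  have hχg : ∀ x, gradient χ x = gradient η x - gradient ζ x := fun x =>
    congrFun (q_grad_sub (hη.differentiable (by norm_num)) (hζ.differentiable (by norm_num))) x
  have hχl : ∀ x, qlap χ x = qlap η x - qlap ζ x := q_lap_sub hη hζ
  have hχgK : ∀ x, ‖gradient χ x‖ ≤ 2*K := fun x => by
    rw [hχg]
    linarith [norm_sub_le (gradient η x) (gradient ζ x), hηg x, hζg x]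
  have hχlK : ∀ x, |qlap χ x| ≤ 2*K := fun x => by
    rw [hχl]
    linarith [abs_sub (qlap η x) (qlap ζ x), hηl x, hζl x]
  have hχin : ∀ x, ‖x‖ ≤ 1/4 → χ x = 0 := fun x hx => by
    simp only [χ]
    rw [hη1 x (by linarith), hζ1 x hx]; simp
  have hχout : ∀ x, 8*R ≤ ‖x‖ → χ x = 0 := fun x hx => by
    simp only [χ]
    rw [hη0 x (by linarith), hζ0 x (by linarith)]; simp
  have hχmid : ∀ x, 1/2 ≤ ‖x‖ → ‖x‖ ≤ 4*R → χ x = 1 := fun x hx hx' => by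
    simp only [χ]
    rw [hη1 x (by linarith), hζ0 x (by linarith)]; simp
  have hevin : ∀ x, ‖x‖ < 1/4 → gradient χ x = 0 ∧ qlap χ x = 0 := fun x hx => by
    refine q_grad_of_ev (c := 0) ?_
    filter_upwards [(isOpen_lt continuous_norm continuous_const).mem_nhds hx] with y hy
    exact hχin y (le_of_lt hy)
  have hevout : ∀ x, 8*R < ‖x‖ → gradient χ x = 0 ∧ qlap χ x = 0 := fun x hx => by
    refine q_grad_of_ev (c := 0) ?_
    filter_upwards [(isOpen_lt continuous_const continuous_norm).mem_nhds hx] with y hy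
    exact hχout y (le_of_lt hy)
  have hevmid : ∀ x, 1/2 < ‖x‖ → ‖x‖ < 4*R → gradient χ x = 0 ∧ qlap χ x = 0 := fun x hx hx' => by
    refine q_grad_of_ev (c := 1) ?_
    filter_upwards [(isOpen_lt continuous_const continuous_norm).mem_nhds hx,
      (isOpen_lt continuous_norm continuous_const).mem_nhds hx'] with y hy hy'
    exact hχmid y (le_of_lt hy) (le_of_lt hy')
  have ht3 : 3 ≤ t := by linarith
  have ht0 : 0 ≤ t := by linarith
  have h4b : 4*b*t^3 = 512*R^2 := by
    rw [ht]; simp only [b]; field_simp; norm_num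
  -- Carleman for each component
  have carl : ∀ u : QE d → ℝ, ContDiff ℝ 2 u →
      Integrable (fun x => qW b t (‖x‖^2) * (χ x * u x) ^2) ∧
      Integrable (fun x => qW b t (‖x‖^2) * ‖x‖^2 * qlap (fun x => χ x * u x) x ^2) ∧
      512*R^2*∫ x, qW b t (‖x‖^2) * (χ x * u x) ^2 ≤
        ∫ x, qW b t (‖x‖^2) * ‖x‖^2 * qlap (fun x => χ x * u x) x ^2 := by
    intro u hu
    rw [← h4b]
    refine q_carleman (hχ.mul hu) ?_ ?_ hb ht3 ?_
    · refine HasCompactSupport.intro (isCompact_closedBall (0:QE d) (8*R)) fun x hx => ?_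
      simp only [mem_closedBall_zero_iff, not_le] at hx
      simp [hχout x hx.le]
    · rw [notMem_tsupport_iff_eventuallyEq]
      have h0 : ‖(0:QE d)‖ < 1/4 := by simp
      filter_upwards [(isOpen_lt continuous_norm continuous_const).mem_nhds h0] with y hy
      simp [hχin y (le_of_lt hy)]
    · intro x hx
      rw [hb4]
      have : ‖x‖ < 8*R := by
        by_contra h
        exact hx (by simp [hχout x (not_lt.1 h)])
      nlinarith [norm_nonneg x]
  obtain ⟨i1, j1, k1⟩ := carl u1 h1
  obtain ⟨i2, j2, k2⟩ := carl u2 h2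
  set D : QE d → ℝ := fun x => ‖gradient u1 x‖^2 + ‖gradient u2 x‖^2 + u1 x^2 + u2 x^2
  have hD0 : ∀ x, 0 ≤ D x := fun x => by positivity
  have gc1 := (q_grad_contDiff (m := 1) h1 (by norm_num)).continuous
  have gc2 := (q_grad_contDiff (m := 1) h2 (by norm_num)).continuous
  have hcc1 := h1.continuous
  have hcc2 := h2.continuous
  have hDc : Continuous D := by fun_prop
  have iD : ∀ r, Integrable ((closedBall (0:QE d) r).indicator D) := fun r => by
    rw [integrable_indicator_iff measurableSet_closedBall]
    exact hDc.continuousOn.integrableOn_compact (isCompact_closedBall _ _)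
  set W1 := qW b t (1/16)
  set W2 := qW b t (16*R^2)
  have hW1 : 0 < W1 := qW_pos _ _ _
  have hW2 : 0 < W2 := qW_pos _ _ _
  -- pointwise
  have hpt : ∀ x, qW b t (‖x‖^2) * ‖x‖^2 * qlap (fun x => χ x * u1 x) x ^2 +
      qW b t (‖x‖^2) * ‖x‖^2 * qlap (fun x => χ x * u2 x) x ^2 ≤
      128*R^2*(qW b t (‖x‖^2) * (χ x * u1 x) ^2 + qW b t (‖x‖^2) * (χ x * u2 x) ^2) +
      4096*R^2*K^2*(W1 * (closedBall (0:QE d) (1/2)).indicator D x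
        + W2 * (closedBall (0:QE d) (8*R)).indicator D x) := by
    intro x
    have hWx := qW_pos b t (‖x‖^2)
    rw [q_lap_mul hχ h1, q_lap_mul hχ h2]
    have n1 : 0 ≤ (closedBall (0:QE d) (1/2)).indicator D x := indicator_nonneg (fun x _ => hD0 x) x
    have n2 : 0 ≤ (closedBall (0:QE d) (8*R)).indicator D x := indicator_nonneg (fun x _ => hD0 x) x
    have nn : 0 ≤ W1 * (closedBall (0:QE d) (1/2)).indicator D x
        + W2 * (closedBall (0:QE d) (8*R)).indicator D x := by positivity
    -- main term
    have hmain : ‖x‖ ≤ 8*R → qW b t (‖x‖^2) * ‖x‖^2 * (2 * (χ x^2 * qlap u1 x^2) + 2 * (χ x^2 * qlap u2 x^2))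
        ≤ 128*R^2*(qW b t (‖x‖^2) * (χ x * u1 x) ^2 + qW b t (‖x‖^2) * (χ x * u2 x) ^2) := by
      intro hx
      have hx2 : ‖x‖^2 ≤ 64*R^2 := by nlinarith [norm_nonneg x]
      calc _ = (2 * (qW b t (‖x‖^2) * χ x^2)) * ‖x‖^2 * (qlap u1 x^2 + qlap u2 x^2) := by ring
        _ ≤ (2 * (qW b t (‖x‖^2) * χ x^2)) * (64*R^2) * (u1 x^2 + u2 x^2) := by
          gcongr ?_ * ?_
          · gcongr
          · exact hlap x
        _ = _ := by ring
    -- no derivative of the cutoff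
    have hflat : gradient χ x = 0 ∧ qlap χ x = 0 → ‖x‖ ≤ 8*R → 
        qW b t (‖x‖^2) * ‖x‖^2 * (χ x * qlap u1 x + 2 * inner ℝ (gradient χ x) (gradient u1 x) + u1 x * qlap χ x) ^2 +
        qW b t (‖x‖^2) * ‖x‖^2 * (χ x * qlap u2 x + 2 * inner ℝ (gradient χ x) (gradient u2 x) + u2 x * qlap χ x) ^2 ≤
      128*R^2*(qW b t (‖x‖^2) * (χ x * u1 x) ^2 + qW b t (‖x‖^2) * (χ x * u2 x) ^2) := by
      rintro ⟨e1, e2⟩ hx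
      refine le_trans ?_ (hmain hx)
      rw [e1, e2]
      simp only [inner_zero_left, mul_zero, add_zero]
      have : 0 ≤ qW b t (‖x‖^2) * ‖x‖^2 * (χ x^2 * qlap u1 x^2 + χ x^2 * qlap u2 x^2) := by positivity
      nlinarith
    have hrest : ‖x‖ ≤ 8*R → qW b t (‖x‖^2) * D x ≤ W1 * (closedBall (0:QE d) (1/2)).indicator D x
        + W2 * (closedBall (0:QE d) (8*R)).indicator D x → 
        qW b t (‖x‖^2) * ‖x‖^2 * (χ x * qlap u1 x + 2 * inner ℝ (gradient χ x) (gradient u1 x) + u1 x * qlap χ x) ^2 +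
        qW b t (‖x‖^2) * ‖x‖^2 * (χ x * qlap u2 x + 2 * inner ℝ (gradient χ x) (gradient u2 x) + u2 x * qlap χ x) ^2 ≤
      128*R^2*(qW b t (‖x‖^2) * (χ x * u1 x) ^2 + qW b t (‖x‖^2) * (χ x * u2 x) ^2) + 
      4096*R^2*K^2*(W1 * (closedBall (0:QE d) (1/2)).indicator D x
        + W2 * (closedBall (0:QE d) (8*R)).indicator D x) := by
      intro hx hD
      have hx2 : ‖x‖^2 ≤ 64*R^2 := by nlinarith [norm_nonneg x]
      have c1 : |(inner ℝ (gradient χ x) (gradient u1 x) : ℝ)| ≤ 2*K * ‖gradient u1 x‖ :=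
        (abs_real_inner_le_norm _ _).trans (mul_le_mul_of_nonneg_right (hχgK x) (norm_nonneg _))
      have c2 : |(inner ℝ (gradient χ x) (gradient u2 x) : ℝ)| ≤ 2*K * ‖gradient u2 x‖ :=
        (abs_real_inner_le_norm _ _).trans (mul_le_mul_of_nonneg_right (hχgK x) (norm_nonneg _))
      have q1 := q_err (c := χ x) (L1 := qlap u1 x) (u := u1 x) (by positivity) c1 (hχlK x)
      have q2 := q_err (c := χ x) (L1 := qlap u2 x) (u := u2 x) (by positivity) c2 (hχlK x)
      have hWs : 0 ≤ qW b t (‖x‖^2) * ‖x‖^2 := by positivity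
      have q3 := mul_le_mul_of_nonneg_left (add_le_add q1 q2) hWs
      have q4 : qW b t (‖x‖^2) * ‖x‖^2 * (16 * (2*K)^2 * D x) ≤ 4096*R^2*K^2*(W1 * (closedBall (0:QE d) (1/2)).indicator D x
        + W2 * (closedBall (0:QE d) (8*R)).indicator D x) := by
        calc _ = 64 * K^2 * ‖x‖^2 * (qW b t (‖x‖^2) * D x) := by ring
          _ ≤ 64 * K^2 * (64*R^2) * (W1 * (closedBall (0:QE d) (1/2)).indicator D x
            + W2 * (closedBall (0:QE d) (8*R)).indicator D x) := by
            have := mul_nonneg hWx.le (hD0 x)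
            gcongr
          _ = _ := by ring
      have q5 := hmain hx
      have q6 : qW b t (‖x‖^2) * ‖x‖^2 * (16 * (2*K)^2 * D x) = qW b t (‖x‖^2) * ‖x‖^2 * (16 * (2*K)^2 * (‖gradient u1 x‖^2 + u1 x^2))
        + qW b t (‖x‖^2) * ‖x‖^2 * (16 * (2*K)^2 * (‖gradient u2 x‖^2 + u2 x^2)) := by
        simp only [D]; ring
      linarith
    have hbx : ‖x‖ ≤ 8*R → 2*b*‖x‖^2 ≤ 1 := fun hx => by
      have hx2 : ‖x‖^2 ≤ 64*R^2 := by nlinarith [norm_nonneg x]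
      nlinarith
    have nn' : 0 ≤ 4096*R^2*K^2*(W1 * (closedBall (0:QE d) (1/2)).indicator D x
        + W2 * (closedBall (0:QE d) (8*R)).indicator D x) := by positivity
    rcases lt_or_ge (8*R) ‖x‖ with hx | hx
    · rw [(hevout x hx).1, (hevout x hx).2, hχout x hx.le]
      simpa using nn'
    rcases lt_or_ge ‖x‖ (1/4) with hx1 | hx1
    · linarith [hflat (hevin x hx1) hx]
    rcases le_or_gt ‖x‖ (1/2) with hx2 | hx2
    · refine hrest hx ?_
      have : qW b t (‖x‖^2) ≤ W1 := qW_anti ht0 (by norm_num) (by nlinarith) (hbx hx)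
      have hi : (closedBall (0:QE d) (1/2)).indicator D x = D x := indicator_of_mem (by simpa using hx2) _
      rw [hi]
      have := mul_le_mul_of_nonneg_right this (hD0 x)
      have := mul_nonneg hW2.le n2
      linarith
    rcases lt_or_ge ‖x‖ (4*R) with hx3 | hx3
    · linarith [hflat (hevmid x hx2 hx3) hx]
    · refine hrest hx ?_
      have : qW b t (‖x‖^2) ≤ W2 := qW_anti ht0 (by positivity) (by nlinarith) (hbx hx)
      have hi : (closedBall (0:QE d) (8*R)).indicator D x = D x := indicator_of_mem (by simpa using hx) _
      rw [hi]
      have := mul_le_mul_of_nonneg_right this (hD0 x)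
      have := mul_nonneg hW1.le n1
      linarith
  have iR1 : Integrable (fun x => 128*R^2*(qW b t (‖x‖^2) * (χ x * u1 x) ^2 + qW b t (‖x‖^2) * (χ x * u2 x) ^2)) :=
    (i1.add i2).const_mul _
  have iR2a : Integrable (fun x => (W1 * (closedBall (0:QE d) (1/2)).indicator D x
        + W2 * (closedBall (0:QE d) (8*R)).indicator D x)) := ((iD _).const_mul _).add ((iD _).const_mul _)
  have hintg := integral_mono (j1.add j2) (iR1.add (iR2a.const_mul (4096*R^2*K^2))) hpt
  simp only [Pi.add_apply] at hintg
  rw [integral_add j1 j2, integral_add iR1 (iR2a.const_mul _), integral_const_mul, integral_const_mul,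
    integral_add i1 i2, integral_add ((iD _).const_mul _) ((iD _).const_mul _), integral_const_mul, integral_const_mul,
    integral_indicator measurableSet_closedBall, integral_indicator measurableSet_closedBall] at hintg
  have ca1 := hcacc (1/2) (by norm_num) u1 u2 h1 h2 hlap m (fun x hx => hm x (by linarith))
  have ca2 := hcacc (8*R) (by linarith) u1 u2 h1 h2 hlap C₀ (fun x _ => hbd x)
  have hX2 : 0 ≤ ∫ x, qW b t (‖x‖^2) * (χ x * u2 x) ^2 := integral_nonneg fun x => by
    have := qW_pos b t (‖x‖^2)
    positivity
  -- lower bound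
  set Wr := qW b t ((R+1)^2)
  have hWr : 0 < Wr := qW_pos _ _ _
  have hlow : Wr * c0 ≤ ∫ x, qW b t (‖x‖^2) * (χ x * u1 x) ^2 := by
    have hl1 : ∀ x, |qlap u1 x| ≤ C₀ := fun x => by
      refine abs_le_of_sq_le_sq ?_ hC₀.le
      nlinarith [hlap x, hbd x, sq_nonneg (qlap u2 x)]
    have hme := hmean u1 h1 a hua hl1
    have ib : Integrable ((ball a 1).indicator fun x => u1 x^2) := by
      rw [integrable_indicator_iff measurableSet_ball]
      exact (Continuous.continuousOn (by fun_prop) |>.integrableOn_compact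
        (isCompact_closedBall a 1)).mono_set ball_subset_closedBall
    calc Wr * c0 ≤ Wr * ∫ x in ball a 1, u1 x^2 := by gcongr
      _ = ∫ x, Wr * (ball a 1).indicator (fun x => u1 x^2) x := by
        rw [integral_const_mul, integral_indicator measurableSet_ball]
      _ ≤ _ := by
        refine integral_mono (ib.const_mul _) i1 fun x => ?_
        have hWx := qW_pos b t (‖x‖^2)
        simp only
        by_cases hx : x ∈ ball a 1
        · rw [indicator_of_mem hx]
          rw [mem_ball, dist_eq_norm] at hx
          have n1 : ‖x‖ ≤ R + 1 := by
            have := norm_add_le a (x - a)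
            rw [add_sub_cancel] at this
            linarith
          have n2 : R - 1 ≤ ‖x‖ := by
            have := norm_sub_norm_le a x
            rw [norm_sub_rev] at this
            linarith
          rw [hχmid x (by linarith) (by linarith), one_mul]
          gcongr
          refine qW_anti ht0 (by nlinarith) (by nlinarith) ?_
          nlinarith
        · rw [indicator_of_notMem hx, mul_zero]
          positivity
  have hrat : W2 ≤ Wr * Real.exp (-R) := qW_ratio (by linarith) hRt
  set X1 := ∫ x, qW b t (‖x‖^2) * (χ x * u1 x) ^2
  set X2 := ∫ x, qW b t (‖x‖^2) * (χ x * u2 x) ^2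
  have ca1' : ∫ x in closedBall 0 (1/2), D x ≤ K' * m^2 := by
    refine ca1.trans ?_
    have : ((1:ℝ)/2)^d ≤ 1 := pow_le_one₀ (by norm_num) (by norm_num)
    have := mul_le_mul_of_nonneg_left this (by positivity : 0 ≤ K' * m^2)
    linarith
  have f1 := mul_le_mul_of_nonneg_left ca1' hW1.le
  have f2 : W2 * ∫ x in closedBall 0 (8*R), D x ≤ Wr * Real.exp (-R) * (K' * (8*R)^d * C₀^2) := by
    refine mul_le_mul hrat ca2 (integral_nonneg hD0) (by positivity)
  have f3 : 384 * R^2 * (X1 + X2) ≤ 4096*R^2*K^2*(W1 * (K' * m^2) + Wr * Real.exp (-R) * (K' * (8*R)^d * C₀^2)) := by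
    have := mul_le_mul_of_nonneg_left (add_le_add f1 f2) (by positivity : 0 ≤ 4096*R^2*K^2)
    linarith
  have f4 : X1 ≤ 12*K^2*(W1 * (K' * m^2) + Wr * Real.exp (-R) * (K' * (8*R)^d * C₀^2)) := by
    have hY : 0 ≤ K^2*(W1 * (K' * m^2) + Wr * Real.exp (-R) * (K' * (8*R)^d * C₀^2)) := by positivity
    set Y := K^2*(W1 * (K' * m^2) + Wr * Real.exp (-R) * (K' * (8*R)^d * C₀^2))
    have : R^2 * (384 * (X1+X2)) ≤ R^2 * (4096 * Y) := by linarith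
    have := le_of_mul_le_mul_left this (by positivity)
    linarith
  have f5 : 12*K^2*(Wr * Real.exp (-R) * (K' * (8*R)^d * C₀^2)) ≤ Wr * (c0/2) := by
    have := mul_le_mul_of_nonneg_left hsmall.le hWr.le
    rw [mul_pow]
    linarith
  rw [div_mul_eq_mul_div, div_le_iff₀ (by positivity)]
  linarith


lemma q_final_num {c : ℝ} (hc : 0 < c) : ∃ R₂ : ℝ, ∀ R : ℝ, R₂ ≤ R → 4 ≤ R → ∀ m : ℝ, 0 ≤ m →
    c * qW (1/(256*R^2)) (32 * R^((4:ℝ)/3)) ((R+1)^2) ≤ m^2 * qW (1/(256*R^2)) (32 * R^((4:ℝ)/3)) (1/16) →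
    113 * Real.exp (-113 * R ^ ((4:ℝ)/3) * Real.log R) ≤ m := by
  have hlim : Tendsto (fun R : ℝ => 113^2 * Real.exp (-R)) atTop (𝓝 (113^2 * 0)) :=
    (Real.tendsto_exp_neg_atTop_nhds_zero).const_mul _
  rw [mul_zero] at hlim
  obtain ⟨R₂, hR₂⟩ := eventually_atTop.1 (hlim.eventually (gt_mem_nhds hc))
  refine ⟨R₂, fun R h2 hR m hm h => ?_⟩
  have hs := hR₂ R h2
  have hR0 : 0 < R := by linarith
  have hRP : R ≤ R^((4:ℝ)/3) := Real.self_le_rpow_of_one_le (by linarith) (by norm_num)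
  set P := R^((4:ℝ)/3)
  have hlog4 : 1 ≤ Real.log R := by
    have h4 : Real.log 4 ≤ Real.log R := Real.log_le_log (by norm_num) hR
    have : (4:ℝ) = 2^2 := by norm_num
    rw [this, Real.log_pow] at h4
    have := Real.log_two_gt_d9
    push_cast at h4
    linarith
  have hlog16 : Real.log (1/16) ≥ -2.8 := by
    have : (1/16:ℝ) = (2^4)⁻¹ := by norm_num
    rw [this, Real.log_inv, Real.log_pow]
    have := Real.log_two_lt_d9
    push_cast
    linarith
  have hlogR : Real.log ((R+1)^2) ≤ 4 * Real.log R := by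
    have : Real.log ((R+1)^2) ≤ Real.log (R^4) := Real.log_le_log (by positivity) (by
      have e : (R+1) ≤ R^2 := by nlinarith
      calc (R+1)^2 ≤ (R^2)^2 := pow_le_pow_left₀ (by linarith) e 2
        _ = R^4 := by ring)
    rw [Real.log_pow R 4] at this
    exact_mod_cast this
  have hP0 : 0 < P := by linarith
  set b := 1/(256*R^2)
  have hb0 : 0 ≤ b := by positivity
  have hb : b ≤ 1/256 := by
    apply one_div_le_one_div_of_le (by norm_num); nlinarith
  have hWr : Real.exp (-(128 * P * Real.log R)) ≤ qW b (32*P) ((R+1)^2) := by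
    unfold qW
    rw [Real.exp_le_exp]
    have : 0 ≤ 2 * (32*P) * b * (R+1)^2 := by positivity
    nlinarith [mul_le_mul_of_nonneg_left hlogR hP0.le]
  have hW1 : qW b (32*P) (1/16) ≤ Real.exp (96 * P * Real.log R) := by
    unfold qW
    rw [Real.exp_le_exp]
    nlinarith [mul_le_mul_of_nonneg_left hlog16 hP0.le, mul_le_mul_of_nonneg_left hb hP0.le,
      mul_le_mul_of_nonneg_left hlog4 hP0.le]
  have h3 : c * Real.exp (-(128 * P * Real.log R)) ≤ m^2 * Real.exp (96 * P * Real.log R) :=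
    (mul_le_mul_of_nonneg_left hWr hc.le).trans (h.trans (mul_le_mul_of_nonneg_left hW1 (sq_nonneg m)))
  have h4 : c * Real.exp (-(224 * P * Real.log R)) ≤ m^2 := by
    have h5 := mul_le_mul_of_nonneg_right h3 (Real.exp_pos (-(96 * P * Real.log R))).le
    have e1 : Real.exp (-(128 * P * Real.log R)) * Real.exp (-(96 * P * Real.log R))
        = Real.exp (-(224 * P * Real.log R)) := by
      rw [← Real.exp_add]; congr 1; ring
    have e2 : Real.exp (96 * P * Real.log R) * Real.exp (-(96 * P * Real.log R)) = 1 := by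
      rw [← Real.exp_add, add_neg_cancel, Real.exp_zero]
    rw [mul_assoc c, mul_assoc (m^2), e1, e2, mul_one] at h5
    exact h5
  refine le_of_sq_le_sq ?_ hm
  calc (113 * Real.exp (-113 * P * Real.log R))^2
      = 113^2 * Real.exp (-(2 * P * Real.log R)) * Real.exp (-(224 * P * Real.log R)) := by
        rw [mul_pow, mul_assoc (113^2), ← Real.exp_add, ← Real.exp_nat_mul]
        congr 2
        push_cast
        ring
    _ ≤ 113^2 * Real.exp (-R) * Real.exp (-(224 * P * Real.log R)) := by
        gcongr
        nlinarith
    _ ≤ c * Real.exp (-(224 * P * Real.log R)) := by gcongr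
    _ ≤ m^2 := h4

lemma q_lapl_comp {d : ℕ} {u : QE d → ℂ} (hu : ContDiff ℝ 2 u) (L : ℂ →L[ℝ] ℝ) (x : QE d) :
    L (lapl u x) = qlap (fun y => L (u y)) x := by
  have hw : ContDiff ℝ 2 (fun y => L (u y)) := L.contDiff.comp hu
  have hg := q_grad_contDiff (m := 1) hw (by norm_num)
  have hgd : DifferentiableAt ℝ (gradient (fun y => L (u y))) x := hg.differentiable (by norm_num) x
  unfold lapl qlap qdiv
  rw [map_sum]
  refine Finset.sum_congr rfl fun i _ => ?_
  have hd : ContDiff ℝ 1 (fderiv ℝ u) := hu.fderiv_right (by norm_num)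
  have h1 : DifferentiableAt ℝ (fun y => fderiv ℝ u y (EuclideanSpace.single i 1)) x :=
    (hd.clm_apply contDiff_const).differentiable (by norm_num) x
  have e1 : (fun y => gradient (fun y => L (u y)) y i) = fun y => L (fderiv ℝ u y (EuclideanSpace.single i 1)) := by
    funext y
    have hy : HasFDerivAt (fun y => L (u y)) (L.comp (fderiv ℝ u y)) y :=
      L.hasFDerivAt.comp y (hu.differentiable (by norm_num) y).hasFDerivAt
    have : inner ℝ (gradient (fun y => L (u y)) y) (EuclideanSpace.single i (1:ℝ)) = fderiv ℝ (fun y => L (u y)) y (EuclideanSpace.single i 1) := by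
      simp [gradient]
    rw [hy.fderiv] at this
    rw [EuclideanSpace.inner_single_right] at this
    simpa only [one_mul, conj_trivial, ContinuousLinearMap.comp_apply] using this
  have e2 : HasFDerivAt (fun y => gradient (fun y => L (u y)) y i)
      ((EuclideanSpace.proj i : QE d →L[ℝ] ℝ).comp (fderiv ℝ (gradient (fun y => L (u y))) x)) x :=
    (EuclideanSpace.proj i : QE d →L[ℝ] ℝ).hasFDerivAt.comp x hgd.hasFDerivAt
  have e3 : HasFDerivAt (fun y => L (fderiv ℝ u y (EuclideanSpace.single i 1)))
      (L.comp (fderiv ℝ (fun y => fderiv ℝ u y (EuclideanSpace.single i 1)) x)) x :=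
    L.hasFDerivAt.comp x h1.hasFDerivAt
  rw [e1] at e2
  have := congrArg (fun T => T (EuclideanSpace.single i 1)) (e3.unique e2)
  simpa using this

/-- **Bourgain–Kenig quantitative unique continuation.**
If `Δu + Vu = 0` on `ℝⁿ` with `|V| ≤ 1`, `|u| ≤ C₀`, `u(0) = 1`, and
`M(R) = inf_{|x₀| = R} sup_{B(x₀,1)} |u|`, then there is `C > 0` depending only on the
dimension and `C₀` such that for all sufficiently large `R`,
`M(R) ≥ C exp(−C R^{4/3} log R)`. -/
theorem quantitative_unique_continuation_elliptic (n : ℕ) (C₀ : ℝ) (hC₀ : 0 < C₀) :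
    ∃ C > (0:ℝ), ∃ R₀ > (0:ℝ),
      ∀ u V : EuclideanSpace ℝ (Fin (n + 1)) → ℂ,
        ContDiff ℝ 2 u →
        (∀ x, lapl u x + V x * u x = 0) →
        (∀ x, ‖V x‖ ≤ 1) →
        (∀ x, ‖u x‖ ≤ C₀) →
        u 0 = 1 →
        ∀ R : ℝ, R₀ ≤ R →
          C * Real.exp (-C * R ^ ((4:ℝ)/3) * Real.log R) ≤
            sInf ((fun x₀ : EuclideanSpace ℝ (Fin (n + 1)) =>
              sSup ((fun x => ‖u x‖) '' ball x₀ 1)) '' {x₀ | ‖x₀‖ = R}) := by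
  obtain ⟨c, hc, R₁, hcore⟩ := q_core (n+1) C₀ hC₀
  obtain ⟨R₂, hnum⟩ := q_final_num hc
  refine ⟨113, by norm_num, max 4 (max R₁ R₂), lt_of_lt_of_le (by norm_num) (le_max_left _ _), ?_⟩
  intro u V hu hV hV1 huC hu0 R hR
  have hR4 : 4 ≤ R := (le_max_left _ _).trans hR
  have hRR1 : R₁ ≤ R := ((le_max_left _ _).trans (le_max_right _ _)).trans hR
  have hRR2 : R₂ ≤ R := ((le_max_right _ _).trans (le_max_right _ _)).trans hR
  have hR0 : 0 < R := by linarith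
  refine le_csInf ?_ ?_
  · refine Set.Nonempty.image _ ⟨EuclideanSpace.single 0 R, ?_⟩
    simp [abs_of_pos hR0]
  rintro _ ⟨x₀, hx₀, rfl⟩
  simp only [mem_setOf_eq] at hx₀
  have hbdd : BddAbove ((fun x => ‖u x‖) '' ball x₀ 1) :=
    ⟨C₀, by rintro _ ⟨x, _, rfl⟩; exact huC x⟩
  have hle : ∀ x, x ∈ ball x₀ 1 → ‖u x‖ ≤ sSup ((fun x => ‖u x‖) '' ball x₀ 1) :=
    fun x hx => le_csSup hbdd ⟨x, hx, rfl⟩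
  have hm0 : 0 ≤ sSup ((fun x => ‖u x‖) '' ball x₀ 1) :=
    (norm_nonneg _).trans (hle x₀ (mem_ball_self one_pos))
  refine hnum R hRR2 hR4 _ hm0 ?_
  have hre : ContDiff ℝ 2 (fun y => Complex.reCLM (u y)) := Complex.reCLM.contDiff.comp hu
  have him : ContDiff ℝ 2 (fun y => Complex.imCLM (u y)) := Complex.imCLM.contDiff.comp hu
  have haff : ContDiff ℝ 2 (fun x : QE (n+1) => x₀ + (1:ℝ) • x) := by fun_prop
  have hnorm : ∀ z : ℂ, Complex.reCLM z ^2 + Complex.imCLM z ^2 = ‖z‖^2 := fun z => by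
    rw [Complex.sq_norm, Complex.normSq_apply]
    simp only [Complex.reCLM_apply, Complex.imCLM_apply]
    ring
  have hP1 : R ≤ R^((4:ℝ)/3) := Real.self_le_rpow_of_one_le (by linarith) (by norm_num)
  refine hcore R hRR1 hR4 (32 * R^((4:ℝ)/3)) ?_ (by linarith)
    (fun x => Complex.reCLM (u (x₀ + (1:ℝ) • x))) (fun x => Complex.imCLM (u (x₀ + (1:ℝ) • x)))
    (hre.comp haff) (him.comp haff) ?_ ?_ (-x₀) (by rw [norm_neg, hx₀]) ?_ _ ?_
  · rw [mul_pow, ← Real.rpow_mul_natCast hR0.le]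
    norm_num
  · intro x
    rw [q_lap_affine hre 1 x₀ x, q_lap_affine him 1 x₀ x, ← q_lapl_comp hu, ← q_lapl_comp hu]
    simp only [one_pow, one_mul]
    rw [hnorm, hnorm]
    have e : lapl u (x₀ + (1:ℝ) • x) = - (V (x₀ + (1:ℝ) • x) * u (x₀ + (1:ℝ) • x)) :=
      eq_neg_of_add_eq_zero_left (hV _)
    rw [e, norm_neg, norm_mul]
    have h1 := mul_le_mul_of_nonneg_right (hV1 (x₀ + (1:ℝ) • x)) (norm_nonneg (u (x₀ + (1:ℝ) • x)))
    rw [one_mul] at h1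
    exact pow_le_pow_left₀ (by positivity) h1 2
  · intro x
    rw [hnorm]
    exact pow_le_pow_left₀ (norm_nonneg _) (huC _) 2
  · simp [hu0]
  · intro x hx
    simp only
    rw [hnorm]
    refine pow_le_pow_left₀ (norm_nonneg _) (hle _ ?_) 2
    simpa using hx
end

section
/- For each k ≥ 1 there exists a solution u ≢ 0 of the k-generalized KdV equation ∂ₜu + ∂ₓ³u + u^k ∂ₓu = 0 on ℝ × [0,1] and a constant C > 0 such that |u(x,0)| + |u(x,1)| ≤ C exp(−C x₊^{3/2}) for all x ∈ ℝ. Hence the two-time uniqueness theorem with weights e^{a x₊^{3/2}} is sharp even for the nonlinear equation. -/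
open MeasureTheory Metric Set Filter
open scoped ENNReal NNReal Topology

namespace GK

/-- clamp of time to `[0,1]` -/
noncomputable def ct (t : ℝ) : ℝ := max 0 (min t 1)

/-- positive imaginary part -/
noncomputable def ep (z : ℂ) : ℝ := max z.im 0

/-- clamp to the closed upper half plane -/
noncomputable def cz (z : ℂ) : ℂ := (z.re : ℂ) + (ep z : ℂ) * Complex.I

/-- the weight -/
noncomputable def Om (t : ℝ) (z : ℂ) : ℝ :=
  Real.exp (2 * ep z ^ 2 - 2 * |z.re| + ep z ^ 3 * ct t + (|z.re| + ep z) * ct t)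
    * (1 + z.re ^ 2)⁻¹

/-- the linear propagator -/
noncomputable def EE (t : ℝ) (z : ℂ) : ℂ := Complex.exp (Complex.I * t * z ^ 3)

/-- convolution along the real line -/
noncomputable def cv (f g : ℝ → ℂ → ℂ) (t : ℝ) (z : ℂ) : ℂ := ∫ r : ℝ, f t r * g t (z - r)

/-- Duhamel operator -/
noncomputable def du (g : ℝ → ℂ → ℂ) (t : ℝ) (z : ℂ) : ℂ :=
  ∫ s in (0:ℝ)..(ct t), EE (ct t - s) (cz z) * (Complex.I * cz z * g s (cz z))

/-- admissible functions -/
structure Good (A : ℝ) (f : ℝ → ℂ → ℂ) : Prop where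
  cont : Continuous (fun p : ℝ × ℂ => f p.1 p.2)
  bd : ∀ t z, ‖f t z‖ ≤ A * Om t z
  holo : ∀ t, DifferentiableOn ℂ (f t) {z | 0 < z.im}
  symm : ∀ t (x : ℝ), f t ((-x : ℝ) : ℂ) = (starRingEnd ℂ) (f t x)

lemma ct_nonneg (t : ℝ) : 0 ≤ ct t := le_max_left _ _
lemma ct_le (t : ℝ) : ct t ≤ 1 := by unfold ct; simp
lemma ct_of (t : ℝ) (h : t ∈ Icc (0:ℝ) 1) : ct t = t := by
  unfold ct; rw [min_eq_left h.2, max_eq_right h.1]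
lemma ct_cont : Continuous ct := by unfold ct; fun_prop
lemma ep_nonneg (z : ℂ) : 0 ≤ ep z := le_max_right _ _
lemma ep_cont : Continuous ep := by unfold ep; fun_prop
lemma cz_cont : Continuous cz := by
  unfold cz; have := ep_cont; fun_prop
@[simp] lemma cz_re (z : ℂ) : (cz z).re = z.re := by simp [cz]
@[simp] lemma cz_im (z : ℂ) : (cz z).im = ep z := by simp [cz]
@[simp] lemma ep_cz (z : ℂ) : ep (cz z) = ep z := by
  have := ep_nonneg z
  conv_lhs => unfold ep
  rw [cz_im, max_eq_left this]
lemma cz_of (z : ℂ) (h : 0 ≤ z.im) : cz z = z := by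
  apply Complex.ext <;> simp [ep, h]
@[simp] lemma ep_real (x : ℝ) : ep (x : ℂ) = 0 := by simp [ep]
@[simp] lemma ep_sub_real (z : ℂ) (x : ℝ) : ep (z - x) = ep z := by simp [ep]
@[simp] lemma Om_cz (t : ℝ) (z : ℂ) : Om t (cz z) = Om t z := by simp [Om]

lemma Om_pos (t : ℝ) (z : ℂ) : 0 < Om t z := by unfold Om; positivity

lemma Om_cont : Continuous (fun p : ℝ × ℂ => Om p.1 p.2) := by
  unfold Om
  have := ep_cont
  have := ct_cont
  have h : ∀ p : ℝ × ℂ, (1 + p.2.re ^ 2) ≠ 0 := fun p => by positivity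
  fun_prop (disch := assumption)

lemma Om_le (t : ℝ) (z : ℂ) :
    Om t z ≤ Real.exp (2 * ep z ^ 2 + ep z ^ 3 + ep z) * (Real.exp (-|z.re|) * (1 + z.re ^ 2)⁻¹) := by
  unfold Om
  rw [← mul_assoc, ← Real.exp_add]
  have h0 := ep_nonneg z
  have h1 := ct_nonneg t
  have h2 := ct_le t
  have h3 : ep z ^ 3 * ct t ≤ ep z ^ 3 := mul_le_of_le_one_right (by positivity) h2
  have h4 : (|z.re| + ep z) * ct t ≤ (|z.re| + ep z) := mul_le_of_le_one_right (by positivity) h2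
  refine mul_le_mul_of_nonneg_right (Real.exp_le_exp.2 ?_) (by positivity)
  linarith

lemma Om_le' (t : ℝ) (z : ℂ) : Om t z ≤ Real.exp (2 * ep z ^ 2 + ep z ^ 3 + ep z) := by
  refine (Om_le t z).trans ?_
  apply mul_le_of_le_one_right (by positivity)
  have h1 : Real.exp (-|z.re|) ≤ 1 := by simp
  have h2 : (1 + z.re ^ 2)⁻¹ ≤ 1 := inv_le_one_of_one_le₀ (by nlinarith)
  exact mul_le_one₀ h1 (by positivity) h2

lemma Om_real_le (t : ℝ) (x : ℝ) : Om t x ≤ Real.exp (-|x|) * (1 + x ^ 2)⁻¹ := by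
  simpa using Om_le t x

lemma Om_real_le' (t : ℝ) (x : ℝ) : Om t x ≤ (1 + x ^ 2)⁻¹ := by
  refine (Om_real_le t x).trans ?_
  apply mul_le_of_le_one_left (by positivity)
  simp

/-- algebra property of the weight -/
lemma Om_mul_le (t : ℝ) (z : ℂ) (r : ℝ) :
    Om t r * Om t (z - r) ≤ Om t z * (2 * (1 + r ^ 2)⁻¹ + 2 * (1 + (z.re - r) ^ 2)⁻¹) := by
  have key : (1 + r ^ 2)⁻¹ * (1 + (z.re - r) ^ 2)⁻¹ ≤
      (1 + z.re ^ 2)⁻¹ * (2 * (1 + r ^ 2)⁻¹ + 2 * (1 + (z.re - r) ^ 2)⁻¹) := by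
    have a : 0 < 1 + r ^ 2 := by positivity
    have b : 0 < 1 + (z.re - r) ^ 2 := by positivity
    have c : 0 < 1 + z.re ^ 2 := by positivity
    rw [← mul_inv, inv_mul_eq_div, le_div_iff₀ c, inv_mul_le_iff₀ (by positivity)]
    have e : (1 + r ^ 2) * (1 + (z.re - r) ^ 2) * (2 * (1 + r ^ 2)⁻¹ + 2 * (1 + (z.re - r) ^ 2)⁻¹)
      = 2 * (1 + (z.re - r) ^ 2) + 2 * (1 + r ^ 2) := by field_simp
    rw [e]
    nlinarith [sq_nonneg (z.re - 2 * r)]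
  unfold Om
  simp only [ep_real, ep_sub_real, Complex.ofReal_re, Complex.sub_re]
  have h1 := ct_nonneg t
  have h2 := ct_le t
  have h3 : |z.re| ≤ |r| + |z.re - r| := by
    have := abs_add_le r (z.re - r); simpa using this
  have hE : Real.exp (2 * 0 ^ 2 - 2 * |r| + 0 ^ 3 * ct t + (|r| + 0) * ct t) *
     Real.exp (2 * ep z ^ 2 - 2 * |z.re - r| + ep z ^ 3 * ct t + (|z.re - r| + ep z) * ct t) ≤
     Real.exp (2 * ep z ^ 2 - 2 * |z.re| + ep z ^ 3 * ct t + (|z.re| + ep z) * ct t) := by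
    rw [← Real.exp_add]
    apply Real.exp_le_exp.2
    nlinarith [mul_le_mul_of_nonneg_right h3 (by linarith : 0 ≤ 2 - ct t)]
  calc _ = (Real.exp (2 * 0 ^ 2 - 2 * |r| + 0 ^ 3 * ct t + (|r| + 0) * ct t) *
     Real.exp (2 * ep z ^ 2 - 2 * |z.re - r| + ep z ^ 3 * ct t + (|z.re - r| + ep z) * ct t)) *
      ((1 + r ^ 2)⁻¹ * (1 + (z.re - r) ^ 2)⁻¹) := by ring
    _ ≤ _ := mul_le_mul hE key (by positivity) (by positivity)
    _ = _ := by ring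

lemma int_w (x : ℝ) : Integrable (fun r : ℝ => 2 * (1 + r ^ 2)⁻¹ + 2 * (1 + (x - r) ^ 2)⁻¹) := by
  apply Integrable.add
  · exact integrable_inv_one_add_sq.const_mul 2
  · exact (integrable_inv_one_add_sq.comp_sub_left x).const_mul 2

lemma int_w_val (x : ℝ) :
    ∫ r : ℝ, (2 * (1 + r ^ 2)⁻¹ + 2 * (1 + (x - r) ^ 2)⁻¹) = 4 * Real.pi := by
  rw [integral_add (integrable_inv_one_add_sq.const_mul 2)
    ((integrable_inv_one_add_sq.comp_sub_left x).const_mul 2), integral_const_mul,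
    integral_const_mul, integral_sub_left_eq_self (fun r : ℝ => (1 + r ^ 2)⁻¹) volume x,
    integral_univ_inv_one_add_sq]
  ring

/-- convolution bound -/
lemma cv_bd {A B : ℝ} {f g : ℝ → ℂ → ℂ} (hB : 0 ≤ B)
    (hf : ∀ t z, ‖f t z‖ ≤ A * Om t z) (hg : ∀ t z, ‖g t z‖ ≤ B * Om t z) (t : ℝ) (z : ℂ) :
    ‖cv f g t z‖ ≤ (4 * Real.pi * A * B) * Om t z := by
  unfold cv
  have hA : 0 ≤ A := by
    have := (norm_nonneg _).trans (hf 0 0)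
    exact nonneg_of_mul_nonneg_left this (Om_pos 0 0)
  refine (norm_integral_le_of_norm_le (((int_w z.re).const_mul (A * B * Om t z)))
    (ae_of_all _ fun r => ?_)).trans ?_
  · rw [norm_mul]
    calc _ ≤ (A * Om t r) * (B * Om t (z - r)) :=
          mul_le_mul (hf _ _) (hg _ _) (norm_nonneg _) (mul_nonneg hA (Om_pos _ _).le)
      _ = A * B * (Om t r * Om t (z - r)) := by ring
      _ ≤ A * B * (Om t z * (2 * (1 + r ^ 2)⁻¹ + 2 * (1 + (z.re - r) ^ 2)⁻¹)) :=
          mul_le_mul_of_nonneg_left (Om_mul_le t z r) (mul_nonneg hA hB)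
      _ = _ := by ring
  · rw [integral_const_mul, int_w_val]
    apply le_of_eq; ring

lemma bd_nonneg {A : ℝ} {f : ℝ → ℂ → ℂ} (hf : ∀ t z, ‖f t z‖ ≤ A * Om t z) : 0 ≤ A :=
  nonneg_of_mul_nonneg_left ((norm_nonneg _).trans (hf 0 0)) (Om_pos 0 0)

lemma cv_integrand_bd {A B : ℝ} {f g : ℝ → ℂ → ℂ}
    (hf : ∀ t z, ‖f t z‖ ≤ A * Om t z) (hg : ∀ t z, ‖g t z‖ ≤ B * Om t z) (t : ℝ) (z : ℂ) (K : ℝ)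
    (hz : ep z ≤ K) (r : ℝ) :
    ‖f t r * g t (z - r)‖ ≤ A * B * Real.exp (2 * K ^ 2 + K ^ 3 + K) * (1 + r ^ 2)⁻¹ := by
  have hA := bd_nonneg hf
  have hB := bd_nonneg hg
  have h0 := ep_nonneg z
  have h1 : Om t (z - r) ≤ Real.exp (2 * K ^ 2 + K ^ 3 + K) := by
    refine (Om_le' _ _).trans ?_
    rw [ep_sub_real]
    gcongr
  rw [norm_mul]
  calc _ ≤ (A * Om t r) * (B * Om t (z - r)) :=
          mul_le_mul (hf _ _) (hg _ _) (norm_nonneg _) (mul_nonneg hA (Om_pos _ _).le)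
    _ ≤ (A * (1 + r ^ 2)⁻¹) * (B * Real.exp (2 * K ^ 2 + K ^ 3 + K)) := by
        have := Om_real_le' t r
        have := (Om_pos t (z - r)).le
        gcongr
    _ = _ := by ring

lemma cv_integrable {A B : ℝ} {f g : ℝ → ℂ → ℂ}
    (cf : Continuous (fun p : ℝ × ℂ => f p.1 p.2)) (cg : Continuous (fun p : ℝ × ℂ => g p.1 p.2))
    (hf : ∀ t z, ‖f t z‖ ≤ A * Om t z) (hg : ∀ t z, ‖g t z‖ ≤ B * Om t z) (t : ℝ) (z : ℂ) :
    Integrable (fun r : ℝ => f t r * g t (z - r)) := by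
  refine Integrable.mono' (integrable_inv_one_add_sq.const_mul
    (A * B * Real.exp (2 * ep z ^ 2 + ep z ^ 3 + ep z))) ?_
    (ae_of_all _ (cv_integrand_bd hf hg t z (ep z) le_rfl))
  have h1 : Continuous fun r : ℝ => f t r := cf.comp (by fun_prop : Continuous fun r : ℝ => (t, (r : ℂ)))
  have h2 : Continuous fun r : ℝ => g t (z - r) :=
    cg.comp (by fun_prop : Continuous fun r : ℝ => (t, z - (r : ℂ)))
  exact (h1.mul h2).aestronglyMeasurable

lemma cv_cont {A B : ℝ} {f g : ℝ → ℂ → ℂ}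
    (cf : Continuous (fun p : ℝ × ℂ => f p.1 p.2)) (cg : Continuous (fun p : ℝ × ℂ => g p.1 p.2))
    (hf : ∀ t z, ‖f t z‖ ≤ A * Om t z) (hg : ∀ t z, ‖g t z‖ ≤ B * Om t z) :
    Continuous (fun p : ℝ × ℂ => cv f g p.1 p.2) := by
  rw [continuous_iff_continuousAt]
  intro p
  unfold cv
  apply continuousAt_of_dominated (bound := fun r => A * B *
    Real.exp (2 * (ep p.2 + 1) ^ 2 + (ep p.2 + 1) ^ 3 + (ep p.2 + 1)) * (1 + r ^ 2)⁻¹)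
  · exact Eventually.of_forall fun q => (cv_integrable cf cg hf hg q.1 q.2).aestronglyMeasurable
  · have : ∀ᶠ q : ℝ × ℂ in 𝓝 p, ep q.2 < ep p.2 + 1 :=
      (ep_cont.comp continuous_snd).continuousAt.eventually_lt continuousAt_const (by simp)
    filter_upwards [this] with q hq
    exact ae_of_all _ (cv_integrand_bd hf hg q.1 q.2 _ hq.le)
  · exact integrable_inv_one_add_sq.const_mul _
  · refine ae_of_all _ fun r => Continuous.continuousAt ?_
    exact (cf.comp (by fun_prop : Continuous fun q : ℝ × ℂ => (q.1, (r : ℂ)))).mul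
      (cg.comp (by fun_prop : Continuous fun q : ℝ × ℂ => (q.1, q.2 - (r : ℂ))))

/-- holomorphy of parametric integrals -/
lemma holo_int {μ : Measure ℝ} {F : ℂ → ℝ → ℂ} {U : Set ℂ} (hU : IsOpen U)
    (hm : ∀ z, AEStronglyMeasurable (F z) μ)
    (hd : ∀ a, DifferentiableOn ℂ (fun z => F z a) U)
    (hb : ∀ z₀ ∈ U, ∃ r > 0, ∃ b : ℝ → ℝ, Integrable b μ ∧
      ∀ᵐ a ∂μ, ∀ z ∈ ball z₀ r, ‖F z a‖ ≤ b a) :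
    DifferentiableOn ℂ (fun z => ∫ a, F z a ∂μ) U := by
  intro z₀ hz
  apply DifferentiableAt.differentiableWithinAt
  obtain ⟨r₁, hr₁, b, hbi, hbb⟩ := hb z₀ hz
  obtain ⟨r₂, hr₂, hsub⟩ := Metric.isOpen_iff.1 hU z₀ hz
  set r := min r₁ r₂ with hr
  have hrpos : 0 < r := lt_min hr₁ hr₂
  have hat : ∀ a, ∀ z ∈ ball z₀ r, DifferentiableAt ℂ (fun z => F z a) z := fun a z hz' =>
    (hd a).differentiableAt (hU.mem_nhds (hsub (ball_subset_ball (min_le_right _ _) hz')))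
  have := (hasDerivAt_integral_of_dominated_loc_of_deriv_le (μ := μ) (F := F)
    (F' := fun z a => deriv (fun z => F z a) z) (x₀ := z₀) (s := ball z₀ (r / 2))
    (bound := fun a => b a / (r / 4)) (ball_mem_nhds _ (by positivity))
    (Eventually.of_forall hm) ?_ ?_ ?_ ?_ ?_).2
  · exact this.differentiableAt
  · refine Integrable.mono' hbi (hm z₀) ?_
    filter_upwards [hbb] with a ha
    exact ha z₀ (mem_ball_self hr₁)
  · have hlim : ∀ a, Tendsto (fun n : ℕ => ((n : ℂ) + 1) * (F (z₀ + 1 / ((n : ℂ) + 1)) a - F z₀ a)) atTop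
        (𝓝 (deriv (fun z => F z a) z₀)) := by
      intro a
      have h := (hat a z₀ (mem_ball_self hrpos)).hasDerivAt
      rw [hasDerivAt_iff_tendsto_slope_zero] at h
      have h2 : Tendsto (fun n : ℕ => 1 / ((n : ℂ) + 1)) atTop (𝓝[≠] 0) := by
        rw [tendsto_nhdsWithin_iff]
        refine ⟨tendsto_one_div_add_atTop_nhds_zero_nat, Eventually.of_forall fun n => ?_⟩
        have : (n : ℂ) + 1 ≠ 0 := by exact_mod_cast Nat.succ_ne_zero n
        simp [this]
      have h3 := h.comp h2
      refine h3.congr fun n => ?_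
      simp
    refine aestronglyMeasurable_of_tendsto_ae atTop (fun n : ℕ => ?_) (ae_of_all _ hlim)
    exact ((hm _).sub (hm _)).const_mul _
  · filter_upwards [hbb] with a ha z hz'
    have hcl : closedBall z (r / 4) ⊆ ball z₀ r := by
      intro y hy
      simp only [mem_ball, mem_closedBall] at *
      have := dist_triangle y z z₀
      linarith
    apply Complex.norm_deriv_le_of_forall_mem_sphere_norm_le (by positivity)
    · apply DifferentiableOn.diffContOnCl
      intro y hy
      exact (hat a y (hcl (closure_ball_subset_closedBall hy))).differentiableWithinAt
    · intro y hy
      exact ha y (ball_subset_ball (min_le_left _ _) (hcl (sphere_subset_closedBall hy)))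
  · exact hbi.div_const _
  · refine ae_of_all _ fun a z hz' => ?_
    exact (hat a z (ball_subset_ball (by linarith) hz')).hasDerivAt

lemma isOpen_up : IsOpen {z : ℂ | 0 < z.im} := isOpen_lt continuous_const Complex.continuous_im

lemma Good.cv {A B : ℝ} {f g : ℝ → ℂ → ℂ} (hf : Good A f) (hg : Good B g) :
    Good (4 * Real.pi * A * B) (cv f g) where
  cont := cv_cont hf.cont hg.cont hf.bd hg.bd
  bd := cv_bd (bd_nonneg hg.bd) hf.bd hg.bd
  holo := by
    intro t
    apply holo_int isOpen_up (fun z => (cv_integrable hf.cont hg.cont hf.bd hg.bd t z).aestronglyMeasurable)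
    · intro a
      apply DifferentiableOn.const_mul
      refine (hg.holo t).comp (f := fun z : ℂ => z - (a : ℂ)) (by fun_prop) ?_
      intro z hz
      simpa using hz
    · intro z₀ hz
      refine ⟨1, one_pos, fun r => A * B *
        Real.exp (2 * (ep z₀ + 1) ^ 2 + (ep z₀ + 1) ^ 3 + (ep z₀ + 1)) * (1 + r ^ 2)⁻¹,
        integrable_inv_one_add_sq.const_mul _, ae_of_all _ fun r z hz' => ?_⟩
      apply cv_integrand_bd hf.bd hg.bd
      have h1 : |z.im - z₀.im| ≤ 1 := by
        have := Complex.abs_im_le_norm (z - z₀)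
        rw [mem_ball, dist_eq_norm] at hz'
        simp only [Complex.sub_im] at this
        linarith
      have h2 := abs_le.1 h1
      unfold ep
      apply max_le
      · linarith [le_max_left z₀.im 0]
      · linarith [le_max_right z₀.im 0]
  symm := by
    intro t x
    unfold GK.cv
    rw [← integral_conj, ← integral_neg_eq_self]
    congr 1
    ext r
    rw [map_mul, ← hf.symm]
    congr 1
    have := hg.symm t (x - r)
    push_cast at this ⊢
    rw [← this]
    congr 1
    ring

lemma EE_norm (t : ℝ) (ht : 0 ≤ t) (z : ℂ) (hz : 0 ≤ z.im) : ‖EE t z‖ ≤ Real.exp (t * z.im ^ 3) := by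
  unfold EE
  rw [Complex.norm_exp]
  apply Real.exp_le_exp.2
  have : (Complex.I * t * z ^ 3).re = t * (z.im ^ 3 - 3 * z.re ^ 2 * z.im) := by
    simp [pow_succ, Complex.mul_re, Complex.mul_im]; ring
  rw [this]
  apply mul_le_mul_of_nonneg_left _ ht
  have : 0 ≤ 3 * z.re ^ 2 * z.im := by positivity
  linarith

lemma EE_cont : Continuous (fun p : ℝ × ℂ => EE p.1 p.2) := by unfold EE; fun_prop

lemma du_integrand_cont {g : ℝ → ℂ → ℂ} (cg : Continuous (fun p : ℝ × ℂ => g p.1 p.2)) :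
    Continuous (fun q : (ℝ × ℂ) × ℝ =>
      EE (ct q.1.1 - q.2) (cz q.1.2) * (Complex.I * cz q.1.2 * g q.2 (cz q.1.2))) := by
  have h1 := ct_cont
  have h2 := cz_cont
  refine (EE_cont.comp (by fun_prop : Continuous fun q : (ℝ × ℂ) × ℝ =>
    (ct q.1.1 - q.2, cz q.1.2))).mul (Continuous.mul (by fun_prop) ?_)
  exact cg.comp (by fun_prop : Continuous fun q : (ℝ × ℂ) × ℝ => (q.2, cz q.1.2))

lemma du_integrand_cont2 (T : ℝ) {g : ℝ → ℂ → ℂ} (cg : Continuous (fun p : ℝ × ℂ => g p.1 p.2)) :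
    Continuous (fun q : ℂ × ℝ =>
      EE (T - q.2) (cz q.1) * (Complex.I * cz q.1 * g q.2 (cz q.1))) := by
  have h2 := cz_cont
  refine (EE_cont.comp (by fun_prop : Continuous fun q : ℂ × ℝ =>
    (T - q.2, cz q.1))).mul (Continuous.mul (by fun_prop) ?_)
  exact cg.comp (by fun_prop : Continuous fun q : ℂ × ℝ => (q.2, cz q.1))

lemma du_cont {g : ℝ → ℂ → ℂ} (cg : Continuous (fun p : ℝ × ℂ => g p.1 p.2)) :
    Continuous (fun p : ℝ × ℂ => du g p.1 p.2) := by
  unfold du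
  exact intervalIntegral.continuous_parametric_intervalIntegral_of_continuous
    (f := fun (p : ℝ × ℂ) s => EE (ct p.1 - s) (cz p.2) * (Complex.I * cz p.2 * g s (cz p.2)))
    (du_integrand_cont cg) (ct_cont.comp continuous_fst)

lemma du_bd {B : ℝ} {g : ℝ → ℂ → ℂ}
    (hg : ∀ t z, ‖g t z‖ ≤ B * Om t z) (t : ℝ) (z : ℂ) : ‖du g t z‖ ≤ B * Om t z := by
  have hB := bd_nonneg hg
  unfold du
  have hT0 := ct_nonneg t
  have hη := ep_nonneg z
  set T := ct t with hT
  set a := |z.re| + ep z with ha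
  have ha0 : 0 ≤ a := by positivity
  set K := B * Real.exp (2 * ep z ^ 2 - 2 * |z.re| + ep z ^ 3 * T) * (1 + z.re ^ 2)⁻¹ with hK
  have hK0 : 0 ≤ K := by positivity
  have hder : ∀ s ∈ uIcc 0 T, HasDerivAt (fun s => K * Real.exp (a * s)) (K * (a * Real.exp (a * s))) s := by
    intro s _
    have := ((hasDerivAt_id s).const_mul a).exp.const_mul K
    simp only [id, mul_one] at this
    rwa [mul_comm (Real.exp (a * s)) a] at this
  have hIntv : IntervalIntegrable (fun s => K * (a * Real.exp (a * s))) volume 0 T :=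
    Continuous.intervalIntegrable (by fun_prop) _ _
  refine (intervalIntegral.norm_integral_le_of_norm_le hT0 (ae_of_all _ fun s hs => ?_) hIntv).trans ?_
  · have hcs : ct s = s := ct_of s ⟨hs.1.le, hs.2.trans (ct_le t)⟩
    rw [norm_mul, norm_mul, norm_mul, Complex.norm_I, one_mul]
    have h1 := EE_norm (T - s) (by linarith [hs.2]) (cz z) (by simpa using hη)
    have h2 : ‖cz z‖ ≤ a := by
      have := Complex.norm_le_abs_re_add_abs_im (cz z)
      rw [cz_re, cz_im, abs_of_nonneg hη] at this
      exact this
    have h3 := hg s (cz z)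
    rw [Om_cz] at h3
    rw [cz_im] at h1
    calc _ ≤ Real.exp ((T - s) * ep z ^ 3) * (a * (B * Om s z)) := by gcongr
      _ = _ := by
        unfold Om
        rw [hcs, hK, ← ha]
        have e1 : Real.exp (2 * ep z ^ 2 - 2 * |z.re| + ep z ^ 3 * s + a * s) =
          Real.exp (2 * ep z ^ 2 - 2 * |z.re|) * Real.exp (ep z ^ 3 * s) * Real.exp (a * s) := by
          rw [← Real.exp_add, ← Real.exp_add]
        have e2 : Real.exp (2 * ep z ^ 2 - 2 * |z.re| + ep z ^ 3 * T) =
          Real.exp (2 * ep z ^ 2 - 2 * |z.re|) * Real.exp (ep z ^ 3 * s)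
            * Real.exp ((T - s) * ep z ^ 3) := by
          rw [← Real.exp_add, ← Real.exp_add]; congr 1; ring
        rw [e1, e2]; ring
  · rw [intervalIntegral.integral_eq_sub_of_hasDerivAt hder hIntv]
    have e : B * Om t z = K * Real.exp (a * T) := by
      unfold Om
      rw [hK, ← hT, ← ha, Real.exp_add _ (a * T)]; ring
    rw [e]
    simp [hK0]

lemma EE_symm (t x : ℝ) : EE t ((-x : ℝ) : ℂ) = (starRingEnd ℂ) (EE t x) := by
  unfold EE
  rw [← Complex.exp_conj]
  congr 1
  simp
  ring

lemma cz_real (x : ℝ) : cz (x : ℂ) = x := cz_of _ (by simp)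

lemma Good.du {B : ℝ} {g : ℝ → ℂ → ℂ} (hg : Good B g) : Good B (du g) where
  cont := du_cont hg.cont
  bd := du_bd hg.bd
  holo := by
    intro t
    unfold GK.du
    simp_rw [intervalIntegral.integral_of_le (ct_nonneg t)]
    have hc2 := du_integrand_cont2 (ct t) hg.cont
    apply holo_int isOpen_up
    · intro z
      exact (hc2.comp (by fun_prop : Continuous fun s : ℝ => (z, s))).aestronglyMeasurable
    · intro s
      have : DifferentiableOn ℂ (fun z => EE (ct t - s) z * (Complex.I * z * g s z)) {z | 0 < z.im} := by
        have h1 : DifferentiableOn ℂ (fun z => EE (ct t - s) z) {z | 0 < z.im} := by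
          unfold EE; fun_prop
        have h2 := hg.holo s
        exact h1.mul (DifferentiableOn.mul (by fun_prop) h2)
      refine this.congr fun z hz => ?_
      rw [cz_of z (le_of_lt hz)]
    · intro z₀ _
      have hcomp : IsCompact (closedBall z₀ 1 ×ˢ Icc (0:ℝ) 1) :=
        (isCompact_closedBall _ _).prod isCompact_Icc
      obtain ⟨C, hC⟩ := hcomp.exists_bound_of_continuousOn hc2.continuousOn
      refine ⟨1, one_pos, fun _ => C, integrable_const _, ?_⟩
      filter_upwards [ae_restrict_mem measurableSet_Ioc] with s hs z hz
      exact hC (z, s) ⟨ball_subset_closedBall hz, hs.1.le, hs.2.trans (ct_le t)⟩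
  symm := by
    intro t x
    unfold GK.du
    rw [cz_real, cz_real, intervalIntegral.integral_of_le (ct_nonneg t),
      intervalIntegral.integral_of_le (ct_nonneg t), ← integral_conj]
    congr 1
    ext s
    rw [EE_symm, hg.symm]
    simp

lemma Good.mono {A B : ℝ} {f : ℝ → ℂ → ℂ} (hf : Good A f) (h : A ≤ B) : Good B f :=
  ⟨hf.cont, fun t z => (hf.bd t z).trans (mul_le_mul_of_nonneg_right h (Om_pos t z).le), hf.holo, hf.symm⟩

lemma Good.add {A B : ℝ} {f g : ℝ → ℂ → ℂ} (hf : Good A f) (hg : Good B g) :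
    Good (A + B) (fun t z => f t z + g t z) where
  cont := hf.cont.add hg.cont
  bd := fun t z => (norm_add_le _ _).trans (by linarith [hf.bd t z, hg.bd t z])
  holo := fun t => (hf.holo t).add (hg.holo t)
  symm := fun t x => by rw [hf.symm, hg.symm, map_add]

lemma Good.smul {A : ℝ} {f : ℝ → ℂ → ℂ} (hf : Good A f) (c : ℝ) :
    Good (|c| * A) (fun t z => c * f t z) where
  cont := hf.cont.const_mul _
  bd := fun t z => by
    rw [norm_mul, Complex.norm_real, Real.norm_eq_abs, mul_assoc]
    exact mul_le_mul_of_nonneg_left (hf.bd t z) (abs_nonneg c)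
  holo := fun t => (hf.holo t).const_mul _
  symm := fun t x => by rw [hf.symm, map_mul, Complex.conj_ofReal]

/-- the free evolution of the Gaussian -/
noncomputable def w0 (t : ℝ) (z : ℂ) : ℂ := EE (ct t) (cz z) * Complex.exp (-2 * cz z ^ 2)

lemma w0_good : Good (Real.exp 1) w0 where
  cont := by
    have h1 := ct_cont
    have h2 := cz_cont
    exact (EE_cont.comp (by fun_prop : Continuous fun q : (ℝ × ℂ) => (ct q.1, cz q.2))).mul
      (by fun_prop)
  bd := by
    intro t z
    unfold w0
    have hη := ep_nonneg z
    have h1 := EE_norm (ct t) (ct_nonneg t) (cz z) (by simpa using hη)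
    rw [cz_im] at h1
    have h2 : ‖Complex.exp (-2 * cz z ^ 2)‖ = Real.exp (2 * ep z ^ 2 - 2 * z.re ^ 2) := by
      rw [Complex.norm_exp]
      congr 1
      simp [pow_two, Complex.mul_re]; ring
    rw [norm_mul, h2]
    have hT0 := ct_nonneg t
    have h3 : Real.exp (-z.re ^ 2) ≤ (1 + z.re ^ 2)⁻¹ := by
      rw [Real.exp_neg]
      apply inv_anti₀ (by positivity)
      linarith [Real.add_one_le_exp (z.re ^ 2)]
    calc _ ≤ Real.exp (ct t * ep z ^ 3) * Real.exp (2 * ep z ^ 2 - 2 * z.re ^ 2) := by gcongr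
      _ = Real.exp (ct t * ep z ^ 3 + 2 * ep z ^ 2 - z.re ^ 2) * Real.exp (-z.re ^ 2) := by
          rw [← Real.exp_add, ← Real.exp_add]; congr 1; ring
      _ ≤ Real.exp (1 + (2 * ep z ^ 2 - 2 * |z.re| + ep z ^ 3 * ct t + (|z.re| + ep z) * ct t)) *
          (1 + z.re ^ 2)⁻¹ := by
          apply mul_le_mul _ h3 (by positivity) (by positivity)
          apply Real.exp_le_exp.2
          have : 0 ≤ (|z.re| + ep z) * ct t := by positivity
          have h5 := sq_nonneg (|z.re| - 1)
          have h6 := sq_abs z.re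
          nlinarith
      _ = _ := by unfold Om; rw [Real.exp_add 1]; ring
  holo := by
    intro t
    have : DifferentiableOn ℂ (fun z => EE (ct t) z * Complex.exp (-2 * z ^ 2)) {z | 0 < z.im} := by
      unfold EE; fun_prop
    refine this.congr fun z hz => ?_
    unfold w0
    rw [cz_of z (le_of_lt hz)]
  symm := by
    intro t x
    unfold w0
    rw [cz_real, cz_real, EE_symm, map_mul, ← Complex.exp_conj]
    have : (starRingEnd ℂ) 2 = 2 := Complex.conj_ofNat 2
    simp [this]

/-- iterated convolution: `(n+1)`-fold -/
noncomputable def QQ (w : ℝ → ℂ → ℂ) : ℕ → ℝ → ℂ → ℂ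
  | 0 => w
  | n + 1 => cv w (QQ w n)

lemma QQ_good {M : ℝ} {w : ℝ → ℂ → ℂ} (hw : Good M w) (n : ℕ) :
    Good ((4 * Real.pi) ^ n * M ^ (n + 1)) (QQ w n) := by
  induction n with
  | zero => simpa [QQ] using hw
  | succ n ih =>
    refine (hw.cv ih).mono (le_of_eq ?_)
    ring

lemma QQ_diff {M D : ℝ} {w v : ℝ → ℂ → ℂ} (hw : Good M w) (hv : Good M v)
    (hD : ∀ t z, ‖w t z - v t z‖ ≤ D * Om t z) (n : ℕ) :
    ∀ t z, ‖QQ w n t z - QQ v n t z‖ ≤ ((n + 1) * (4 * Real.pi) ^ n * M ^ n * D) * Om t z := by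
  have hM := bd_nonneg hw.bd
  have hD0 : 0 ≤ D := bd_nonneg (f := fun t z => w t z - v t z) hD
  induction n with
  | zero => simpa [QQ] using hD
  | succ n ih =>
    intro t z
    have hq := QQ_good hw n
    have hq' := QQ_good hv n
    have e : QQ w (n + 1) t z - QQ v (n + 1) t z =
        cv (fun t z => w t z - v t z) (QQ w n) t z + cv v (fun t z => QQ w n t z - QQ v n t z) t z := by
      simp only [QQ]
      unfold cv
      have i1 := cv_integrable (hw.cont.sub hv.cont) hq.cont hD hq.bd t z
      have i2 := cv_integrable hv.cont (hq.cont.sub hq'.cont) hv.bd ih t z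
      have i3 := cv_integrable hw.cont hq.cont hw.bd hq.bd t z
      have i4 := cv_integrable hv.cont hq'.cont hv.bd hq'.bd t z
      rw [← integral_add i1 i2, ← integral_sub i3 i4]
      congr 1
      ext r
      ring
    rw [e]
    have b1 := cv_bd (bd_nonneg hq.bd) hD hq.bd t z
    have b2 := cv_bd (bd_nonneg (f := fun t z => QQ w n t z - QQ v n t z) ih) hv.bd ih t z
    refine (norm_add_le _ _).trans ((add_le_add b1 b2).trans (le_of_eq ?_))
    push_cast
    ring


lemma tlu {X : Type*} [TopologicalSpace X] {F : ℕ → X → ℂ} {f : X → ℂ} {O : X → ℝ} {a : ℕ → ℝ}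
    (hO : Continuous O) (ha : Tendsto a atTop (𝓝 0)) (ha0 : ∀ n, 0 ≤ a n)
    (h : ∀ n x, ‖F n x - f x‖ ≤ a n * O x) : TendstoLocallyUniformly F f atTop := by
  rw [Metric.tendstoLocallyUniformly_iff]
  intro ε hε x
  have h1 : ∀ᶠ y in 𝓝 x, O y < |O x| + 1 :=
    hO.continuousAt.eventually_lt continuousAt_const (by linarith [le_abs_self (O x)])
  refine ⟨_, h1, ?_⟩
  have h2 : Tendsto (fun n => a n * (|O x| + 1)) atTop (𝓝 0) := by
    simpa using ha.mul_const (|O x| + 1)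
  filter_upwards [h2.eventually_lt_const hε] with n hn y hy
  rw [dist_comm, dist_eq_norm]
  exact ((h n y).trans (mul_le_mul_of_nonneg_left (le_of_lt hy) (ha0 n))).trans_lt hn

/-- the Picard map -/
noncomputable def Phi (ε : ℝ) (k : ℕ) (w : ℝ → ℂ → ℂ) (t : ℝ) (z : ℂ) : ℂ :=
  (ε : ℂ) * w0 t z + ((-(1 / ((k : ℝ) + 1)) : ℝ) : ℂ) * du (QQ w k) t z

lemma small_pow {M : ℝ} {k : ℕ} (hk : 1 ≤ k) (hM : 0 ≤ M) (h : 4 * Real.pi * M ≤ 1 / 2) :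
    (4 * Real.pi) ^ k * M ^ k ≤ 1 / 2 := by
  rw [← mul_pow]
  have h0 : 0 ≤ 4 * Real.pi * M := by positivity
  calc _ ≤ (4 * Real.pi * M) ^ 1 := pow_le_pow_of_le_one h0 (by linarith) hk
    _ ≤ _ := by simpa using h

lemma Phi_good {ε M : ℝ} {k : ℕ} (hk : 1 ≤ k) (h : 4 * Real.pi * M ≤ 1 / 2) (hε : 0 ≤ ε)
    (hεM : ε * Real.exp 1 ≤ M / 2) {w : ℝ → ℂ → ℂ} (hw : Good M w) : Good M (Phi ε k w) := by
  have hM := bd_nonneg hw.bd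
  refine ((w0_good.smul ε).add (((QQ_good hw k).du).smul (-(1 / ((k : ℝ) + 1))))).mono ?_
  rw [abs_of_nonneg hε, abs_neg, abs_of_nonneg (by positivity)]
  have h1 := small_pow hk hM h
  have h2 : 1 / ((k : ℝ) + 1) ≤ 1 := by
    rw [div_le_one (by positivity)]; linarith [Nat.cast_nonneg (α := ℝ) k]
  have h3 : (4 * Real.pi) ^ k * M ^ (k + 1) ≤ 1 / 2 * M := by
    rw [pow_succ, ← mul_assoc]; gcongr
  have h4 : 1 / ((k : ℝ) + 1) * ((4 * Real.pi) ^ k * M ^ (k + 1)) ≤ 1 * (1 / 2 * M) :=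
    mul_le_mul h2 h3 (by positivity) (by norm_num)
  linarith

lemma Phi_diff {ε M D : ℝ} {k : ℕ} (hk : 1 ≤ k) (h : 4 * Real.pi * M ≤ 1 / 2)
    {w v : ℝ → ℂ → ℂ} (hw : Good M w) (hv : Good M v)
    (hD : ∀ t z, ‖w t z - v t z‖ ≤ D * Om t z) (t : ℝ) (z : ℂ) :
    ‖Phi ε k w t z - Phi ε k v t z‖ ≤ (D / 2) * Om t z := by
  have hM := bd_nonneg hw.bd
  have hD0 : 0 ≤ D := bd_nonneg (f := fun t z => w t z - v t z) hD
  have hq := QQ_good hw k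
  have hq' := QQ_good hv k
  have e : Phi ε k w t z - Phi ε k v t z = ((-(1 / ((k : ℝ) + 1)) : ℝ) : ℂ) *
      du (fun t z => QQ w k t z - QQ v k t z) t z := by
    have : du (fun t z => QQ w k t z - QQ v k t z) t z = du (QQ w k) t z - du (QQ v k) t z := by
      unfold du
      rw [← intervalIntegral.integral_sub]
      · congr 1
        ext s
        ring
      · exact Continuous.intervalIntegrable ((du_integrand_cont2 (ct t) hq.cont).comp
          (by fun_prop : Continuous fun s : ℝ => (z, s))) _ _
      · exact Continuous.intervalIntegrable ((du_integrand_cont2 (ct t) hq'.cont).comp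
          (by fun_prop : Continuous fun s : ℝ => (z, s))) _ _
    rw [this]
    unfold Phi
    ring
  rw [e, norm_mul, Complex.norm_real, Real.norm_eq_abs, abs_neg, abs_of_nonneg (by positivity)]
  have b := du_bd (g := fun t z => QQ w k t z - QQ v k t z) (QQ_diff hw hv hD k) t z
  have h1 := small_pow hk hM h
  have hk1 : 0 < (k : ℝ) + 1 := by positivity
  calc _ ≤ 1 / ((k : ℝ) + 1) * ((((k : ℝ) + 1) * (4 * Real.pi) ^ k * M ^ k * D) * Om t z) := by gcongr
    _ = ((4 * Real.pi) ^ k * M ^ k) * D * Om t z := by field_simp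
    _ ≤ (1 / 2) * D * Om t z := by have := (Om_pos t z).le; gcongr
    _ = _ := by ring

/-- Picard iterates -/
noncomputable def WW (ε : ℝ) (k : ℕ) : ℕ → ℝ → ℂ → ℂ
  | 0 => fun _ _ => 0
  | n + 1 => Phi ε k (WW ε k n)

lemma exists_fixed {ε M : ℝ} {k : ℕ} (hk : 1 ≤ k) (hM : 0 ≤ M) (h : 4 * Real.pi * M ≤ 1 / 2)
    (hε : 0 ≤ ε) (hεM : ε * Real.exp 1 ≤ M / 2) :
    ∃ w, Good M w ∧ ∀ t z, w t z = Phi ε k w t z := by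
  have hG : ∀ n, Good M (WW ε k n) := by
    intro n
    induction n with
    | zero =>
      refine ⟨continuous_const, fun t z => ?_, fun t => differentiableOn_const _, fun t x => ?_⟩
      · simpa [WW] using mul_nonneg hM (Om_pos t z).le
      · simp [WW]
    | succ n ih => exact Phi_good hk h hε hεM ih
  have hdiff : ∀ n t z, ‖WW ε k (n + 1) t z - WW ε k n t z‖ ≤ (M * (1 / 2) ^ n) * Om t z := by
    intro n
    induction n with
    | zero =>
      intro t z
      have := (hG 1).bd t z
      simpa [WW] using this
    | succ n ih =>
      intro t z
      refine (Phi_diff (ε := ε) hk h (hG (n + 1)) (hG n) ih t z).trans (le_of_eq ?_)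
      ring
  have hgeo : ∀ t z n, dist (WW ε k n t z) (WW ε k (n + 1) t z) ≤ (M * Om t z) * (1 / 2) ^ n := by
    intro t z n
    rw [dist_comm, dist_eq_norm]
    refine (hdiff n t z).trans (le_of_eq ?_)
    ring
  have hlim : ∀ t z, ∃ l, Tendsto (fun n => WW ε k n t z) atTop (𝓝 l) := fun t z =>
    cauchySeq_tendsto_of_complete
      (cauchySeq_of_le_geometric (1 / 2) (M * Om t z) (by norm_num) (hgeo t z))
  choose w hw using hlim
  have hdist : ∀ n t z, ‖WW ε k n t z - w t z‖ ≤ (2 * M * (1 / 2) ^ n) * Om t z := by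
    intro n t z
    rw [← dist_eq_norm]
    refine (dist_le_of_le_geometric_of_tendsto (1 / 2) (M * Om t z) (by norm_num) (hgeo t z)
      (hw t z) n).trans (le_of_eq ?_)
    ring
  have ha : Tendsto (fun n : ℕ => 2 * M * (1 / 2 : ℝ) ^ n) atTop (𝓝 0) := by
    simpa using (tendsto_pow_atTop_nhds_zero_of_lt_one (r := (1 / 2 : ℝ)) (by norm_num)
      (by norm_num)).const_mul (2 * M)
  have ha0 : ∀ n : ℕ, 0 ≤ 2 * M * (1 / 2 : ℝ) ^ n := fun n => by positivity
  have hgood : Good M w := by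
    refine ⟨?_, fun t z => ?_, fun t => ?_, fun t x => ?_⟩
    · have := tlu (F := fun n (p : ℝ × ℂ) => WW ε k n p.1 p.2) (f := fun p => w p.1 p.2) Om_cont ha ha0
        (fun n p => hdist n p.1 p.2)
      exact this.continuous (Eventually.of_forall fun n => (hG n).cont).frequently
    · exact le_of_tendsto (hw t z).norm (Eventually.of_forall fun n => (hG n).bd t z)
    · have := tlu (F := fun n (z : ℂ) => WW ε k n t z) (f := fun z => w t z)
        (Om_cont.comp (by fun_prop : Continuous fun z : ℂ => (t, z))) ha ha0
        (fun n z => hdist n t z)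
      exact (this.tendstoLocallyUniformlyOn (s := {z : ℂ | 0 < z.im})).differentiableOn
        (Eventually.of_forall fun n => (hG n).holo t) isOpen_up
    · refine tendsto_nhds_unique (hw t _) ?_
      simp_rw [fun n => (hG n).symm t x]
      exact (Complex.continuous_conj.tendsto _).comp (hw t x)
  refine ⟨w, hgood, fun t z => ?_⟩
  have h1 : Tendsto (fun n => WW ε k (n + 1) t z) atTop (𝓝 (w t z)) :=
    (hw t z).comp (tendsto_add_atTop_nat 1)
  have h2 : Tendsto (fun n => WW ε k (n + 1) t z) atTop (𝓝 (Phi ε k w t z)) := by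
    rw [tendsto_iff_norm_sub_tendsto_zero]
    have h3 : Tendsto (fun n : ℕ => (2 * M * (1 / 2 : ℝ) ^ n) / 2 * Om t z) atTop (𝓝 0) := by
      simpa using (ha.div_const 2).mul_const (Om t z)
    refine squeeze_zero (fun n => norm_nonneg _) (fun n => ?_) h3
    exact Phi_diff hk h (hG n) hgood (hdist n) t z
  exact tendsto_nhds_unique h1 h2


/-- contour shift -/
lemma shift {f : ℂ → ℂ} (hc : Continuous f) (hd : DifferentiableOn ℂ f {z | 0 < z.im}) {H C : ℝ}
    (hH : 0 ≤ H) (hb : ∀ x y : ℝ, 0 ≤ y → y ≤ H → ‖f (x + y * Complex.I)‖ ≤ C * (1 + x ^ 2)⁻¹) :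
    ∫ x : ℝ, f (x + H * Complex.I) = ∫ x : ℝ, f x := by
  have hi : ∀ y : ℝ, 0 ≤ y → y ≤ H → Integrable (fun x : ℝ => f (x + y * Complex.I)) := by
    intro y h0 h1
    refine Integrable.mono' (integrable_inv_one_add_sq.const_mul C) ?_
      (ae_of_all _ fun x => hb x y h0 h1)
    exact (hc.comp (by fun_prop : Continuous fun x : ℝ => (x : ℂ) + y * Complex.I)).aestronglyMeasurable
  have hi0 : Integrable (fun x : ℝ => f x) := by simpa using hi 0 le_rfl hH
  have L1 := intervalIntegral_tendsto_integral (hi H hH le_rfl) tendsto_neg_atTop_atBot tendsto_id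
  have L2 := intervalIntegral_tendsto_integral hi0 tendsto_neg_atTop_atBot tendsto_id
  have side : ∀ R : ℝ, ‖∫ y : ℝ in (0:ℝ)..H, f (R + y * Complex.I)‖ ≤ C * (1 + R ^ 2)⁻¹ * H := by
    intro R
    have := intervalIntegral.norm_integral_le_of_norm_le_const (a := 0) (b := H)
      (f := fun y : ℝ => f (R + y * Complex.I)) (C := C * (1 + R ^ 2)⁻¹) ?_
    · simpa [abs_of_nonneg hH] using this
    · intro y hy
      rw [uIoc_of_le hH] at hy
      exact hb R y hy.1.le hy.2
  have hz : Tendsto (fun R : ℝ => 2 * (C * (1 + R ^ 2)⁻¹ * H)) atTop (𝓝 0) := by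
    have h1 : Tendsto (fun R : ℝ => 1 + R ^ 2) atTop atTop :=
      tendsto_atTop_add_const_left _ _ (tendsto_pow_atTop (by norm_num))
    have := ((h1.inv_tendsto_atTop.const_mul C).mul_const H).const_mul 2
    simpa using this
  have hdiff : Tendsto (fun R : ℝ => (∫ x in (-R)..R, f (x + H * Complex.I)) - ∫ x in (-R)..R, f x)
      atTop (𝓝 0) := by
    refine squeeze_zero_norm (fun R => ?_) hz
    have e := Complex.integral_boundary_rect_eq_zero_of_continuousOn_of_differentiableOn f
      ((-R : ℝ) : ℂ) ((R : ℂ) + H * Complex.I) hc.continuousOn (hd.mono ?_)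
    · simp only [Complex.ofReal_re, Complex.ofReal_im, Complex.add_re, Complex.add_im,
        Complex.mul_re, Complex.mul_im, Complex.I_re, Complex.I_im, mul_zero, mul_one, sub_zero,
        add_zero, zero_add, Complex.ofReal_zero, zero_mul, smul_eq_mul] at e
      have e2 : (∫ x in (-R)..R, f (x + H * Complex.I)) - ∫ x in (-R)..R, f x =
          Complex.I * (∫ y : ℝ in (0:ℝ)..H, f (R + y * Complex.I)) -
          Complex.I * (∫ y : ℝ in (0:ℝ)..H, f ((-R : ℝ) + y * Complex.I)) := by
        linear_combination (-1 : ℂ) * e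
      rw [e2]
      refine (norm_sub_le _ _).trans ?_
      rw [norm_mul, norm_mul, Complex.norm_I, one_mul, one_mul]
      have s1 := side R
      have s2 := side (-R)
      rw [neg_sq] at s2
      linarith
    · intro z hz
      have h2 := hz.2
      simp only [Complex.ofReal_im, Complex.add_im, Complex.mul_im, Complex.I_im, Complex.I_re,
        Complex.ofReal_re, mul_one, mul_zero, add_zero, zero_add, mem_preimage, min_eq_left hH] at h2
      exact h2.1
  have := tendsto_nhds_unique (L1.sub L2) hdiff
  exact sub_eq_zero.1 this

/-- Fourier integral -/
noncomputable def FT (g : ℝ → ℂ) (x : ℝ) : ℂ := ∫ ξ : ℝ, Complex.exp (Complex.I * x * ξ) * g ξ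

lemma norm_ex (x ξ : ℝ) : ‖Complex.exp (Complex.I * x * ξ)‖ = 1 := by
  rw [Complex.norm_exp]; simp

/-- continuous with exponential decay -/
def Dec (g : ℝ → ℂ) : Prop :=
  Continuous g ∧ ∃ K : ℝ, ∃ n : ℕ, 0 ≤ K ∧ ∀ ξ, ‖g ξ‖ ≤ K * ((1 + |ξ|) ^ n * Real.exp (-|ξ|))

lemma pe_bd (n : ℕ) (ξ : ℝ) :
    (1 + |ξ|) ^ n * Real.exp (-|ξ|) ≤ (Real.exp 1 * (n + 2).factorial) * (1 + ξ ^ 2)⁻¹ := by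
  have h0 : 0 ≤ |ξ| := abs_nonneg ξ
  have h1 := Real.pow_div_factorial_le_exp (1 + |ξ|) (by positivity) (n + 2)
  rw [div_le_iff₀ (by positivity), Real.exp_add] at h1
  rw [← div_eq_mul_inv, le_div_iff₀ (by positivity)]
  have h2 : 1 + ξ ^ 2 ≤ (1 + |ξ|) ^ 2 := by nlinarith [sq_abs ξ]
  calc _ ≤ (1 + |ξ|) ^ n * Real.exp (-|ξ|) * (1 + |ξ|) ^ 2 := by gcongr
    _ = (1 + |ξ|) ^ (n + 2) * Real.exp (-|ξ|) := by ring
    _ ≤ (Real.exp 1 * Real.exp |ξ| * (n + 2).factorial) * Real.exp (-|ξ|) := by gcongr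
    _ = Real.exp 1 * (n + 2).factorial * (Real.exp |ξ| * Real.exp (-|ξ|)) := by ring
    _ = _ := by rw [← Real.exp_add]; simp

lemma pe_int (n : ℕ) : Integrable (fun ξ : ℝ => (1 + |ξ|) ^ n * Real.exp (-|ξ|)) := by
  refine Integrable.mono' (integrable_inv_one_add_sq.const_mul (Real.exp 1 * (n + 2).factorial)) ?_
    (ae_of_all _ fun ξ => ?_)
  · exact Continuous.aestronglyMeasurable (by fun_prop)
  · rw [Real.norm_eq_abs, abs_of_nonneg (by positivity)]
    exact pe_bd n ξ

lemma Dec.int {g : ℝ → ℂ} (h : Dec g) : Integrable g := by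
  obtain ⟨hc, K, n, hK, hb⟩ := h
  exact Integrable.mono' ((pe_int n).const_mul K) hc.aestronglyMeasurable (ae_of_all _ hb)

lemma Dec.mulI {g : ℝ → ℂ} (h : Dec g) : Dec (fun ξ => Complex.I * ξ * g ξ) := by
  obtain ⟨hc, K, n, hK, hb⟩ := h
  refine ⟨by fun_prop, K, n + 1, hK, fun ξ => ?_⟩
  rw [norm_mul, norm_mul, Complex.norm_I, one_mul, Complex.norm_real, Real.norm_eq_abs]
  have h0 : 0 ≤ |ξ| := abs_nonneg ξ
  calc _ ≤ (1 + |ξ|) * (K * ((1 + |ξ|) ^ n * Real.exp (-|ξ|))) :=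
        mul_le_mul (by linarith) (hb ξ) (norm_nonneg _) (by positivity)
    _ = _ := by ring

lemma Dec.ex {g : ℝ → ℂ} (h : Dec g) (x : ℝ) :
    Integrable (fun ξ : ℝ => Complex.exp (Complex.I * x * ξ) * g ξ) := by
  have hc := h.1
  refine Integrable.mono' h.int.norm (Continuous.aestronglyMeasurable (by fun_prop))
    (ae_of_all _ fun ξ => ?_)
  rw [norm_mul, norm_ex, one_mul]

lemma FT_deriv {g : ℝ → ℂ} (h : Dec g) (x : ℝ) :
    HasDerivAt (FT g) (FT (fun ξ => Complex.I * ξ * g ξ) x) x := by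
  have hc := h.1
  have := (hasDerivAt_integral_of_dominated_loc_of_deriv_le (μ := volume) (𝕜 := ℝ)
    (F := fun (x : ℝ) (ξ : ℝ) => Complex.exp (Complex.I * x * ξ) * g ξ)
    (F' := fun (x : ℝ) (ξ : ℝ) => Complex.exp (Complex.I * x * ξ) * (Complex.I * ξ * g ξ))
    (x₀ := x) (s := univ) (bound := fun ξ => ‖Complex.I * ξ * g ξ‖) univ_mem
    (Eventually.of_forall fun y => (h.ex y).aestronglyMeasurable) (h.ex x)
    (h.mulI.ex x).aestronglyMeasurable ?_ h.mulI.int.norm ?_).2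
  · exact this
  · refine ae_of_all _ fun ξ y _ => ?_
    rw [norm_mul, norm_ex, one_mul]
  · refine ae_of_all _ fun ξ y _ => ?_
    have h1 : HasDerivAt (fun y : ℝ => Complex.I * (y : ℂ) * ξ) (Complex.I * 1 * ξ) y :=
      ((Complex.ofRealCLM.hasDerivAt (x := y)).const_mul Complex.I).mul_const _
    have h2 := h1.cexp.mul_const (g ξ)
    refine h2.congr_deriv ?_
    ring

lemma Good.dec {A : ℝ} {f : ℝ → ℂ → ℂ} (hf : Good A f) (t : ℝ) : Dec (fun ξ : ℝ => f t ξ) := by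
  refine ⟨hf.cont.comp (by fun_prop : Continuous fun ξ : ℝ => (t, (ξ : ℂ))), A, 0, bd_nonneg hf.bd,
    fun ξ => (hf.bd t ξ).trans ?_⟩
  have hA := bd_nonneg hf.bd
  gcongr
  refine (Om_real_le t ξ).trans ?_
  rw [pow_zero, one_mul]
  exact mul_le_of_le_one_right (by positivity) (inv_le_one_of_one_le₀ (by nlinarith))

lemma FT_cv {f g : ℝ → ℂ → ℂ} (t : ℝ) (hf : Dec (fun ξ : ℝ => f t ξ)) (hg : Dec (fun ξ : ℝ => g t ξ))
    (x : ℝ) : FT (fun ξ : ℝ => cv f g t ξ) x = FT (fun ξ : ℝ => f t ξ) x * FT (fun ξ : ℝ => g t ξ) x := by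
  have := integral_convolution (ContinuousLinearMap.mul ℝ ℂ) (hf.ex x) (hg.ex x)
  rw [ContinuousLinearMap.mul_apply'] at this
  unfold FT
  rw [← this]
  congr 1
  ext ξ
  unfold MeasureTheory.convolution cv
  rw [← integral_const_mul]
  congr 1
  ext r
  rw [ContinuousLinearMap.mul_apply']
  have : Complex.exp (Complex.I * x * ξ) =
      Complex.exp (Complex.I * x * r) * Complex.exp (Complex.I * x * (ξ - r : ℝ)) := by
    rw [← Complex.exp_add]; congr 1; push_cast; ring
  rw [this]
  push_cast
  ring

lemma FT_QQ {M : ℝ} {w : ℝ → ℂ → ℂ} (hw : Good M w) (n : ℕ) (t x : ℝ) :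
    FT (fun ξ : ℝ => QQ w n t ξ) x = FT (fun ξ : ℝ => w t ξ) x ^ (n + 1) := by
  induction n with
  | zero => simp [QQ]
  | succ n ih =>
    simp only [QQ]
    rw [FT_cv t (hw.dec t) ((QQ_good hw n).dec t), ih]
    ring

lemma FT_real {g : ℝ → ℂ} (h : ∀ ξ, g (-ξ) = (starRingEnd ℂ) (g ξ)) (x : ℝ) :
    (starRingEnd ℂ) (FT g x) = FT g x := by
  unfold FT
  rw [← integral_conj, ← integral_neg_eq_self]
  congr 1
  ext ξ
  rw [map_mul, h, ← Complex.exp_conj, Complex.conj_conj]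
  simp

lemma FT_decay {M : ℝ} {w : ℝ → ℂ → ℂ} (hw : Good M w) (t x η : ℝ) (hη : 0 ≤ η) :
    ‖FT (fun ξ : ℝ => w t ξ) x‖ ≤ Real.pi * M * Real.exp (2 * η ^ 2 + η ^ 3 + η - η * x) := by
  have hM := bd_nonneg hw.bd
  have hwc : Continuous (w t) := hw.cont.comp (by fun_prop : Continuous fun z : ℂ => (t, z))
  have bb : ∀ a b : ℝ, 0 ≤ b → ‖Complex.exp (Complex.I * x * (a + b * Complex.I)) *
      w t (a + b * Complex.I)‖ ≤ M * Real.exp (2 * b ^ 2 + b ^ 3 + b - b * x) * (1 + a ^ 2)⁻¹ := by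
    intro a b hb
    rw [norm_mul, Complex.norm_exp]
    have h1 : (Complex.I * x * (a + b * Complex.I)).re = -(b * x) := by
      simp [Complex.mul_re, Complex.mul_im]; ring
    have h2 : ep ((a : ℂ) + b * Complex.I) = b := by simp [ep, hb]
    have h4 : ((a : ℂ) + b * Complex.I).re = a := by simp
    have h3 := Om_le t ((a : ℂ) + b * Complex.I)
    rw [h2, h4] at h3
    rw [h1]
    calc _ ≤ Real.exp (-(b * x)) * (M * (Real.exp (2 * b ^ 2 + b ^ 3 + b) *
          (1 * (1 + a ^ 2)⁻¹))) := by
          refine mul_le_mul_of_nonneg_left ((hw.bd t _).trans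
            (mul_le_mul_of_nonneg_left (h3.trans ?_) hM)) (by positivity)
          gcongr
          simp
      _ = _ := by rw [sub_eq_add_neg, Real.exp_add _ (-(b * x))]; ring
  have hs := shift (f := fun z => Complex.exp (Complex.I * x * z) * w t z) (H := η)
    (C := M * Real.exp (2 * η ^ 2 + η ^ 3 + η + η * |x|)) (by fun_prop) ?_ hη ?_
  · unfold FT
    rw [← hs]
    refine (norm_integral_le_of_norm_le (integrable_inv_one_add_sq.const_mul
      (M * Real.exp (2 * η ^ 2 + η ^ 3 + η - η * x))) (ae_of_all _ fun a => bb a η hη)).trans ?_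
    rw [integral_const_mul, integral_univ_inv_one_add_sq]
    apply le_of_eq; ring
  · exact DifferentiableOn.mul (by fun_prop) (hw.holo t)
  · intro a b hb hbη
    refine (bb a b hb).trans ?_
    have h1 : b * (-x) ≤ η * |x| :=
      (mul_le_mul_of_nonneg_left (neg_le_abs x) hb).trans
        (mul_le_mul_of_nonneg_right hbη (abs_nonneg x))
    have h2 : b ^ 2 ≤ η ^ 2 := by gcongr
    have h3 : b ^ 3 ≤ η ^ 3 := by gcongr
    have h4 : 2 * b ^ 2 + b ^ 3 + b - b * x ≤ 2 * η ^ 2 + η ^ 3 + η + η * |x| := by linarith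
    have h5 := Real.exp_le_exp.2 h4
    gcongr

/-- the nonlinear term on the Fourier side -/
noncomputable def NN (k : ℕ) (w : ℝ → ℂ → ℂ) (s : ℝ) (ξ : ℝ) : ℂ :=
  ((-(1 / ((k : ℝ) + 1)) : ℝ) : ℂ) * (Complex.I * ξ * QQ w k s ξ)

/-- extension of the solution (Fourier side) to all times -/
noncomputable def we (ε : ℝ) (k : ℕ) (w : ℝ → ℂ → ℂ) (t : ℝ) (ξ : ℝ) : ℂ :=
  EE t ξ * ((ε : ℂ) * Complex.exp (-2 * (ξ : ℂ) ^ 2) + ∫ s in (0:ℝ)..t, EE (-s) ξ * NN k w s ξ)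

lemma EE_add (a b : ℝ) (z : ℂ) : EE (a + b) z = EE a z * EE b z := by
  unfold EE
  rw [← Complex.exp_add]; congr 1; push_cast; ring

lemma EE_real_norm (a ξ : ℝ) : ‖EE a ξ‖ = 1 := by
  unfold EE
  rw [Complex.norm_exp]
  have : Complex.I * (a : ℂ) * (ξ : ℂ) ^ 3 = ((a * ξ ^ 3 : ℝ) : ℂ) * Complex.I := by push_cast; ring
  rw [this, Complex.re_ofReal_mul]
  simp

lemma we_eq {ε : ℝ} {k : ℕ} {w : ℝ → ℂ → ℂ} (hfix : ∀ t z, w t z = Phi ε k w t z) (t : ℝ)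
    (ht : t ∈ Icc (0:ℝ) 1) (ξ : ℝ) : we ε k w t ξ = w t ξ := by
  rw [hfix]
  unfold Phi we w0 du NN
  rw [cz_real, ct_of t ht, mul_add, ← intervalIntegral.integral_const_mul,
    ← intervalIntegral.integral_const_mul]
  congr 1
  · ring
  · congr 1
    ext s
    rw [sub_eq_add_neg t s, EE_add]
    ring

lemma NN_cont {M : ℝ} {k : ℕ} {w : ℝ → ℂ → ℂ} (hw : Good M w) :
    Continuous (fun p : ℝ × ℝ => NN k w p.1 p.2) := by
  unfold NN
  have := (QQ_good hw k).cont.comp (by fun_prop : Continuous fun p : ℝ × ℝ => (p.1, (p.2 : ℂ)))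
  simp only [Function.comp_def] at this
  fun_prop

lemma NN_bd {M : ℝ} {k : ℕ} {w : ℝ → ℂ → ℂ} (hw : Good M w) :
    ∃ A : ℝ, 0 ≤ A ∧ ∀ s ξ, ‖NN k w s ξ‖ ≤ A * ((1 + |ξ|) * Real.exp (-|ξ|)) := by
  have hq := QQ_good hw k
  have hA := bd_nonneg hq.bd
  refine ⟨_, mul_nonneg (abs_nonneg (-(1 / ((k : ℝ) + 1)))) hA, fun s ξ => ?_⟩
  unfold NN
  rw [norm_mul, norm_mul, norm_mul, Complex.norm_I, one_mul, Complex.norm_real, Complex.norm_real,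
    Real.norm_eq_abs, Real.norm_eq_abs, mul_assoc]
  refine mul_le_mul_of_nonneg_left ?_ (abs_nonneg _)
  have h1 : Om s ξ ≤ Real.exp (-|ξ|) := (Om_real_le s ξ).trans
    (mul_le_of_le_one_right (by positivity) (inv_le_one_of_one_le₀ (by nlinarith)))
  have h0 : 0 ≤ |ξ| := abs_nonneg ξ
  calc _ ≤ (1 + |ξ|) * (((4 * Real.pi) ^ k * M ^ (k + 1)) * Real.exp (-|ξ|)) :=
        mul_le_mul (by linarith) ((hq.bd s ξ).trans (mul_le_mul_of_nonneg_left h1 hA))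
          (norm_nonneg _) (by positivity)
    _ = _ := by ring

lemma we_cont {ε M : ℝ} {k : ℕ} {w : ℝ → ℂ → ℂ} (hw : Good M w) :
    Continuous (fun p : ℝ × ℝ => we ε k w p.1 p.2) := by
  unfold we
  have h1 : Continuous (fun p : ℝ × ℝ => EE p.1 p.2) :=
    EE_cont.comp (by fun_prop : Continuous fun p : ℝ × ℝ => (p.1, (p.2 : ℂ)))
  refine h1.mul (Continuous.add (by fun_prop) ?_)
  refine intervalIntegral.continuous_parametric_intervalIntegral_of_continuous
    (f := fun (p : ℝ × ℝ) s => EE (-s) p.2 * NN k w s p.2) ?_ continuous_fst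
  have h2 : Continuous (fun p : (ℝ × ℝ) × ℝ => EE (-p.2) p.1.2) :=
    EE_cont.comp (by fun_prop : Continuous fun p : (ℝ × ℝ) × ℝ => (-p.2, (p.1.2 : ℂ)))
  exact h2.mul ((NN_cont hw).comp (by fun_prop : Continuous fun p : (ℝ × ℝ) × ℝ => (p.2, p.1.2)))

lemma we_bd {ε M A : ℝ} {k : ℕ} {w : ℝ → ℂ → ℂ} (hA : 0 ≤ A) (hε : 0 ≤ ε)
    (hN : ∀ s ξ, ‖NN k w s ξ‖ ≤ A * ((1 + |ξ|) * Real.exp (-|ξ|))) (t ξ : ℝ) (ht : |t| ≤ 2) :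
    ‖we ε k w t ξ‖ ≤ (ε * Real.exp 1 + 2 * A) * ((1 + |ξ|) * Real.exp (-|ξ|)) := by
  unfold we
  rw [norm_mul, EE_real_norm, one_mul]
  have h0 : 0 ≤ |ξ| := abs_nonneg ξ
  have h1 : ‖Complex.exp (-2 * (ξ : ℂ) ^ 2)‖ ≤ Real.exp 1 * ((1 + |ξ|) * Real.exp (-|ξ|)) := by
    rw [Complex.norm_exp]
    have : (-2 * (ξ : ℂ) ^ 2).re = -2 * ξ ^ 2 := by
      simp [pow_two]
    rw [this]
    calc Real.exp (-2 * ξ ^ 2) ≤ Real.exp (1 + -|ξ|) := by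
          apply Real.exp_le_exp.2
          nlinarith [sq_abs ξ, sq_nonneg (|ξ| - 1)]
      _ = Real.exp 1 * (1 * Real.exp (-|ξ|)) := by rw [Real.exp_add]; ring
      _ ≤ _ := by gcongr; linarith
  have h2 : ‖∫ s in (0:ℝ)..t, EE (-s) ξ * NN k w s ξ‖ ≤ (A * ((1 + |ξ|) * Real.exp (-|ξ|))) * |t - 0| := by
    apply intervalIntegral.norm_integral_le_of_norm_le_const
    intro s _
    rw [norm_mul, EE_real_norm, one_mul]
    exact hN s ξ
  rw [sub_zero] at h2
  refine (norm_add_le _ _).trans ?_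
  rw [norm_mul, Complex.norm_real, Real.norm_eq_abs, abs_of_nonneg hε]
  have h3 : (A * ((1 + |ξ|) * Real.exp (-|ξ|))) * |t| ≤ (A * ((1 + |ξ|) * Real.exp (-|ξ|))) * 2 := by
    gcongr
  have h4 := mul_le_mul_of_nonneg_left h1 hε
  linarith

lemma we_deriv {ε M : ℝ} {k : ℕ} {w : ℝ → ℂ → ℂ} (hw : Good M w) (ξ t : ℝ) :
    HasDerivAt (fun t => we ε k w t ξ) (Complex.I * ξ ^ 3 * we ε k w t ξ + NN k w t ξ) t := by
  have h1 : HasDerivAt (fun t : ℝ => EE t ξ) (EE t ξ * (Complex.I * ξ ^ 3)) t := by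
    have h2 : HasDerivAt (fun t : ℝ => Complex.I * (t : ℂ) * (ξ : ℂ) ^ 3)
        (Complex.I * 1 * (ξ : ℂ) ^ 3) t :=
      ((Complex.ofRealCLM.hasDerivAt (x := t)).const_mul Complex.I).mul_const _
    have h3 := h2.cexp
    rw [mul_one] at h3
    exact h3
  have hc : Continuous (fun s : ℝ => EE (-s) ξ * NN k w s ξ) :=
    (EE_cont.comp (by fun_prop : Continuous fun s : ℝ => (-s, (ξ : ℂ)))).mul
      ((NN_cont hw).comp (by fun_prop : Continuous fun s : ℝ => (s, ξ)))
  have h4 : HasDerivAt (fun t => ∫ s in (0:ℝ)..t, EE (-s) ξ * NN k w s ξ) (EE (-t) ξ * NN k w t ξ) t :=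
    intervalIntegral.integral_hasDerivAt_right (hc.intervalIntegrable _ _)
      (hc.stronglyMeasurableAtFilter _ _) hc.continuousAt
  have h5 := h1.mul (h4.const_add ((ε : ℂ) * Complex.exp (-2 * (ξ : ℂ) ^ 2)))
  refine h5.congr_deriv ?_
  have h6 : EE t ξ * EE (-t) ξ = 1 := by rw [← EE_add]; simp [EE]
  unfold we
  linear_combination NN k w t ξ * h6

lemma FT_t_deriv {ε M : ℝ} {k : ℕ} {w : ℝ → ℂ → ℂ} (hw : Good M w) (hε : 0 ≤ ε) (x t : ℝ)
    (ht : t ∈ Icc (0:ℝ) 1) :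
    HasDerivAt (fun t => FT (we ε k w t) x)
      (FT (fun ξ => Complex.I * ξ ^ 3 * we ε k w t ξ + NN k w t ξ) x) t := by
  obtain ⟨A, hA, hN⟩ := NN_bd (k := k) hw
  have wc : ∀ t, Continuous (we ε k w t) := fun t =>
    (we_cont hw).comp (by fun_prop : Continuous fun ξ : ℝ => (t, ξ))
  have nc : ∀ t, Continuous (NN k w t) := fun t =>
    (NN_cont hw).comp (by fun_prop : Continuous fun ξ : ℝ => (t, ξ))
  have := (hasDerivAt_integral_of_dominated_loc_of_deriv_le (μ := volume) (𝕜 := ℝ)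
    (F := fun (t : ℝ) (ξ : ℝ) => Complex.exp (Complex.I * x * ξ) * we ε k w t ξ)
    (F' := fun (t : ℝ) (ξ : ℝ) => Complex.exp (Complex.I * x * ξ) *
      (Complex.I * ξ ^ 3 * we ε k w t ξ + NN k w t ξ))
    (x₀ := t) (s := ball t 1)
    (bound := fun ξ => (ε * Real.exp 1 + 3 * A) * ((1 + |ξ|) ^ 4 * Real.exp (-|ξ|)))
    (ball_mem_nhds _ one_pos)
    (Eventually.of_forall fun y => ?_) ?_ ?_ ?_ ((pe_int 4).const_mul _) ?_).2
  · exact this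
  · have := wc y
    exact Continuous.aestronglyMeasurable (by fun_prop)
  · apply Dec.ex
    refine ⟨wc t, ε * Real.exp 1 + 2 * A, 1, by positivity, fun ξ => ?_⟩
    rw [pow_one]
    exact we_bd (M := M) hA hε hN t ξ (by rw [abs_of_nonneg ht.1]; linarith [ht.2])
  · have := wc t
    have := nc t
    exact Continuous.aestronglyMeasurable (by fun_prop)
  · refine ae_of_all _ fun ξ y hy => ?_
    have hy2 : |y| ≤ 2 := by
      rw [mem_ball, Real.dist_eq, abs_lt] at hy
      rw [abs_le]
      constructor <;> linarith [ht.1, ht.2]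
    have b1 := we_bd (M := M) hA hε hN y ξ hy2
    have b2 := hN y ξ
    have h0 : 0 ≤ |ξ| := abs_nonneg ξ
    rw [norm_mul, norm_ex, one_mul]
    refine (norm_add_le _ _).trans ?_
    rw [norm_mul, norm_mul, Complex.norm_I, one_mul, norm_pow, Complex.norm_real, Real.norm_eq_abs]
    have c1 : |ξ| ^ 3 * ‖we ε k w y ξ‖ ≤ (1 + |ξ|) ^ 3 *
        ((ε * Real.exp 1 + 2 * A) * ((1 + |ξ|) * Real.exp (-|ξ|))) := by
      gcongr; linarith
    have c2 : A * ((1 + |ξ|) * Real.exp (-|ξ|)) ≤ A * ((1 + |ξ|) ^ 4 * Real.exp (-|ξ|)) := by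
      gcongr
      exact le_self_pow₀ (by linarith) (by norm_num)
    calc _ ≤ _ := add_le_add c1 (b2.trans c2)
      _ = _ := by ring
  · refine ae_of_all _ fun ξ y _ => ?_
    exact (we_deriv hw ξ y).const_mul _

lemma exp_bd (y : ℝ) (hy : 0 ≤ y) :
    2 * (y / 2) ^ 2 + (y / 2) ^ 3 + y / 2 - (y / 2) * y ^ 2 ≤ 2 + -(1 / 8) * y ^ 3 := by
  nlinarith [mul_nonneg hy (sq_nonneg (y - 2)), sq_nonneg (y - 2), mul_nonneg hy (sq_nonneg (y - 1))]

end GK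

open GK

/-- **Sharpness of the `x₊^{3/2}` decay rate for the k-generalized KdV equation
(Escauriaza–Kenig–Ponce–Vega).** For each `k ≥ 1` there is a nontrivial solution `u`
of `∂ₜu + ∂ₓ³u + uᵏ∂ₓu = 0` on `ℝ × [0,1]` and a constant `C > 0` with
`|u(x,0)| + |u(x,1)| ≤ C exp(−C x₊^{3/2})` for all `x`. -/
theorem gKdV_sharpness (k : ℕ) (hk : 1 ≤ k) :
    ∃ u : ℝ → ℝ → ℝ, ∃ C > (0:ℝ),
      -- classical regularity
      (∀ t ∈ Icc (0:ℝ) 1, ContDiff ℝ 3 (u t)) ∧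
      (∀ x : ℝ, ∀ t ∈ Icc (0:ℝ) 1, DifferentiableAt ℝ (fun s => u s x) t) ∧
      -- u solves the k-generalized KdV equation on ℝ × [0,1]
      (∀ t ∈ Icc (0:ℝ) 1, ∀ x : ℝ,
        deriv (fun s => u s x) t + deriv (deriv (deriv (u t))) x
          + u t x ^ k * deriv (u t) x = 0) ∧
      -- u is not identically zero
      (∃ t ∈ Icc (0:ℝ) 1, ∃ x : ℝ, u t x ≠ 0) ∧
      -- decay at the two endpoint times
      (∀ x : ℝ, |u 0 x| + |u 1 x| ≤ C * Real.exp (-C * max x 0 ^ ((3:ℝ)/2))) := by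
  set M : ℝ := 1 / (16 * Real.pi * Real.exp 2) with hMdef
  have hπ := Real.pi_pos
  have hM0 : 0 < M := by positivity
  have hM1 : 4 * Real.pi * M ≤ 1 / 2 := by
    have h1 : 1 ≤ Real.exp 2 := Real.one_le_exp (by norm_num)
    have h2 : 4 * Real.pi * M = 1 / (4 * Real.exp 2) := by rw [hMdef]; field_simp; norm_num
    rw [h2]
    apply one_div_le_one_div_of_le <;> linarith
  set ε : ℝ := M / (2 * Real.exp 1) with hεdef
  have hε0 : 0 < ε := by positivity
  have hεM : ε * Real.exp 1 ≤ M / 2 := by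
    apply le_of_eq; rw [hεdef]; field_simp
  obtain ⟨w, hw, hfix⟩ := exists_fixed hk hM0.le hM1 hε0.le hεM
  have hwe : ∀ t ∈ Icc (0:ℝ) 1, we ε k w t = fun ξ : ℝ => w t ξ := fun t ht =>
    funext fun ξ => we_eq hfix t ht ξ
  have hreal : ∀ t ∈ Icc (0:ℝ) 1, ∀ x, FT (we ε k w t) x = ((FT (we ε k w t) x).re : ℂ) := by
    intro t ht x
    rw [hwe t ht]
    refine (Complex.conj_eq_iff_re.1 (FT_real (fun ξ => ?_) x)).symm
    exact hw.symm t ξ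
  have hD0 : ∀ t ∈ Icc (0:ℝ) 1, Dec (we ε k w t) := fun t ht => by rw [hwe t ht]; exact hw.dec t
  have hre : ∀ {g : ℝ → ℂ}, Dec g → ∀ x, HasDerivAt (fun x => (FT g x).re)
      (FT (fun ξ => Complex.I * ξ * g ξ) x).re x := fun hg x =>
    Complex.reCLM.hasFDerivAt.comp_hasDerivAt x (FT_deriv hg x)
  have hder : ∀ {g : ℝ → ℂ}, Dec g → deriv (fun x => (FT g x).re) =
      fun x => (FT (fun ξ => Complex.I * ξ * g ξ) x).re := fun hg =>
    funext fun x => (hre hg x).deriv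
  have htd : ∀ x, ∀ t ∈ Icc (0:ℝ) 1, HasDerivAt (fun s => (FT (we ε k w s) x).re)
      (FT (fun ξ => Complex.I * ξ ^ 3 * we ε k w t ξ + NN k w t ξ) x).re t := fun x t ht =>
    Complex.reCLM.hasFDerivAt.comp_hasDerivAt t (FT_t_deriv hw hε0.le x t ht)
  refine ⟨fun t x => (FT (we ε k w t) x).re, 1 / 8, by norm_num, ?_, ?_, ?_, ?_, ?_⟩
  · intro t ht
    have d0 := hD0 t ht
    have c0 : ∀ {g : ℝ → ℂ}, Dec g → ContDiff ℝ 0 (fun x => (FT g x).re) := fun hg =>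
      contDiff_zero.2 (continuous_iff_continuousAt.2 fun x => (hre hg x).continuousAt)
    have step : ∀ n : ℕ, (∀ {g : ℝ → ℂ}, Dec g → ContDiff ℝ n (fun x => (FT g x).re)) →
        ∀ {g : ℝ → ℂ}, Dec g → ContDiff ℝ (n + 1 : ℕ) (fun x => (FT g x).re) := by
      intro n ih g hg
      push_cast
      rw [contDiff_succ_iff_deriv]
      refine ⟨fun x => (hre hg x).differentiableAt, by simp, ?_⟩
      rw [hder hg]
      exact ih hg.mulI
    exact step 2 (step 1 (step 0 c0)) d0
  · intro x t ht
    exact (htd x t ht).differentiableAt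
  · intro t ht x
    have d0 := hD0 t ht
    have dQ := (QQ_good hw k).dec t
    rw [(htd x t ht).deriv, hder d0, hder d0.mulI, hder d0.mulI.mulI]
    simp only
    -- nonlinear identity
    have e1 : (fun y => FT (fun ξ : ℝ => QQ w k t ξ) y) = fun y => FT (we ε k w t) y ^ (k + 1) := by
      funext y
      rw [FT_QQ hw k t y, hwe t ht]
    have e2 := (FT_deriv d0 x).pow (k + 1)
    have e3 := FT_deriv dQ x
    have e4 : FT (fun ξ : ℝ => Complex.I * ξ * QQ w k t ξ) x =
        ((k : ℂ) + 1) * (FT (we ε k w t) x ^ k * FT (fun ξ => Complex.I * ξ * we ε k w t ξ) x) := by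
      have e3' : HasDerivAt (fun y => FT (we ε k w t) y ^ (k + 1))
          (FT (fun ξ : ℝ => Complex.I * ξ * QQ w k t ξ) x) x := by
        rw [← e1]; exact e3
      rw [e3'.unique e2]
      push_cast
      ring
    have hk1 : (k : ℂ) + 1 ≠ 0 := by exact_mod_cast Nat.succ_ne_zero k
    have e5 : FT (fun ξ => Complex.I * ξ ^ 3 * we ε k w t ξ + NN k w t ξ) x =
        - FT (fun ξ => Complex.I * ξ * (Complex.I * ξ * (Complex.I * ξ * we ε k w t ξ))) x
        - FT (we ε k w t) x ^ k * FT (fun ξ => Complex.I * ξ * we ε k w t ξ) x := by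
      have e6 : FT (we ε k w t) x ^ k * FT (fun ξ => Complex.I * ξ * we ε k w t ξ) x =
          (1 / ((k : ℂ) + 1)) * FT (fun ξ : ℝ => Complex.I * ξ * QQ w k t ξ) x := by
        rw [e4]; field_simp
      rw [e6]
      unfold FT
      have i1 : Integrable (fun ξ : ℝ => -(Complex.exp (Complex.I * x * ξ) *
          (Complex.I * ξ * (Complex.I * ξ * (Complex.I * ξ * we ε k w t ξ))))) :=
        (d0.mulI.mulI.mulI.ex x).neg
      have i2 : Integrable (fun ξ : ℝ => (1 / ((k : ℂ) + 1)) *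
          (Complex.exp (Complex.I * x * ξ) * (Complex.I * ξ * QQ w k t ξ))) :=
        (dQ.mulI.ex x).const_mul _
      rw [← integral_const_mul, ← integral_neg, ← integral_sub i1 i2]
      congr 1
      ext ξ
      unfold NN
      push_cast
      have hI : Complex.I ^ 3 = - Complex.I := Complex.I_pow_three
      linear_combination (Complex.exp (Complex.I * x * ξ) * ξ ^ 3 * we ε k w t ξ) * hI
    rw [e5, hreal t ht x, ← Complex.ofReal_pow]
    simp only [Complex.sub_re, Complex.neg_re, Complex.re_ofReal_mul, Complex.ofReal_re]
    ring
  · refine ⟨0, by simp, 0, ?_⟩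
    have : FT (we ε k w 0) 0 = ((ε * Real.sqrt (Real.pi / 2) : ℝ) : ℂ) := by
      rw [← integral_gaussian 2, ← integral_const_mul, ← integral_complex_ofReal]
      unfold FT
      congr 1
      ext ξ
      simp [we, EE]
    simp only [this, Complex.ofReal_re]
    positivity
  · intro x
    have bd : ∀ t ∈ Icc (0:ℝ) 1, |(FT (we ε k w t) x).re| ≤
        1 / 16 * Real.exp (-(1 / 8) * max x 0 ^ ((3:ℝ)/2)) := by
      intro t ht
      refine (Complex.abs_re_le_norm _).trans ?_
      rw [hwe t ht]
      set y := Real.sqrt (max x 0) with hy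
      have hy0 : 0 ≤ y := Real.sqrt_nonneg _
      have hm : max x 0 = y ^ 2 := (Real.sq_sqrt (le_max_right _ _)).symm
      have hp : max x 0 ^ ((3:ℝ)/2) = y ^ 3 := by
        rw [hm, ← Real.rpow_natCast y 2, ← Real.rpow_mul hy0, ← Real.rpow_natCast y 3]
        norm_num
      rw [hp]
      have hyx : (y / 2) * x = (y / 2) * y ^ 2 := by
        rcases le_total x 0 with h | h
        · have : y = 0 := by rw [hy, max_eq_right h]; simp
          rw [this]; ring
        · rw [← hm, max_eq_left h]
      have h1 := FT_decay hw t x (y / 2) (by positivity)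
      rw [hyx] at h1
      refine h1.trans ?_
      have h2 := Real.exp_le_exp.2 (exp_bd y hy0)
      rw [Real.exp_add] at h2
      calc _ ≤ Real.pi * M * (Real.exp 2 * Real.exp (-(1 / 8) * y ^ 3)) := by gcongr
        _ = _ := by rw [hMdef]; field_simp
    have b0 := bd 0 (by simp)
    have b1 := bd 1 (by simp)
    calc _ ≤ _ := add_le_add b0 b1
      _ = _ := by ring
end
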